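/- Let 1 ≤ r < n and let I, J, K be r-element subsets of [n] = {1,…,n}. Then (μ(I), μ(J), μ(K)) ∈ Horn(r) if and only if (μ((I^o)^c), μ((J^o)^c), μ((K^o)^c)) ∈ Horn(n−r), where for A ⊂ [n], A^o = {n+1−a : a ∈ A} and A^c = [n] \ A. -/

import Mathlib

open Matrix

/-- Eigenvalues of a (Hermitian) complex matrix, listed in decreasing order. -/
noncomputable def eigVec {k : ℕ} (X : Matrix (Fin k) (Fin k) ℂ) (hX : X.IsHermitian) :
    Fin k → ℝ :=
  fun i => hX.eigenvalues (Tuple.sort hX.eigenvalues i.rev)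

/-- The `i`-th (0-based) singular value of a rectangular complex matrix:
the square root of the `i`-th largest eigenvalue of `Y * Yᴴ` (and `0` for `i ≥ a`). -/
noncomputable def sval {a b : ℕ} (Y : Matrix (Fin a) (Fin b) ℂ) (i : ℕ) : ℝ :=
  if h : i < a then
    Real.sqrt (eigVec (Y * Yᴴ) (Matrix.isHermitian_mul_conjTranspose_self Y) ⟨i, h⟩)
  else 0

/-- The Horn cone `Horn(k)`. -/
def Horn (k : ℕ) : Set ((Fin k → ℝ) × (Fin k → ℝ) × (Fin k → ℝ)) :=
  { v | ∃ (X Y : Matrix (Fin k) (Fin k) ℂ) (hX : X.IsHermitian) (hY : Y.IsHermitian),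
      v.1 = eigVec X hX ∧ v.2.1 = eigVec Y hY ∧ v.2.2 = eigVec (X + Y) (hX.add hY) }

/-- The Littlewood–Richardson cone `LR(m,n)`. -/
def LRcone (m n : ℕ) : Set ((Fin (m + n) → ℝ) × (Fin m → ℝ) × (Fin n → ℝ)) :=
  { v | ∃ (M : Matrix (Fin (m + n)) (Fin (m + n)) ℂ) (hM : M.IsHermitian),
      v.1 = eigVec M hM ∧
      v.2.1 = eigVec (M.submatrix (Fin.castAdd n) (Fin.castAdd n))
        (hM.submatrix (Fin.castAdd n)) ∧
      v.2.2 = eigVec (M.submatrix (Fin.natAdd m) (Fin.natAdd m))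
        (hM.submatrix (Fin.natAdd m)) }

/-- Top-left `p × p` block. -/
def blockTL (p q : ℕ) (X : Matrix (Fin (p + q)) (Fin (p + q)) ℂ) : Matrix (Fin p) (Fin p) ℂ :=
  X.submatrix (Fin.castAdd q) (Fin.castAdd q)

/-- Top-right `p × q` block. -/
def blockTR (p q : ℕ) (X : Matrix (Fin (p + q)) (Fin (p + q)) ℂ) : Matrix (Fin p) (Fin q) ℂ :=
  X.submatrix (Fin.castAdd q) (Fin.natAdd p)

/-- Bottom-left `q × p` block. -/
def blockBL (p q : ℕ) (X : Matrix (Fin (p + q)) (Fin (p + q)) ℂ) : Matrix (Fin q) (Fin p) ℂ :=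
  X.submatrix (Fin.natAdd p) (Fin.castAdd q)

/-- Bottom-right `q × q` block. -/
def blockBR (p q : ℕ) (X : Matrix (Fin (p + q)) (Fin (p + q)) ℂ) : Matrix (Fin q) (Fin q) ℂ :=
  X.submatrix (Fin.natAdd p) (Fin.natAdd p)

/-- `λ* = (−λ_k, …, −λ_1)`. -/
def starVec {k : ℕ} (x : Fin k → ℝ) : Fin k → ℝ := fun i => -x i.rev

/-- `ŝ^{p,q} = (s₁, …, s_q, 0, …, 0, −s_q, …, −s₁) ∈ ℝ^{p+q}` (with `p − q` middle zeros). -/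
noncomputable def hatPQ (p q : ℕ) (s : Fin q → ℝ) : Fin (p + q) → ℝ :=
  fun i =>
    if h : (i : ℕ) < q then s ⟨i, h⟩
    else if h' : (i : ℕ) < p then 0
    else -s ⟨p + q - 1 - i, by have := i.isLt; omega⟩

/-- The cone `A(p,q)`: pairs `(e(X), s(X₁₂))` for `X` Hermitian of size `p+q`. -/
def coneA (p q : ℕ) : Set ((Fin (p + q) → ℝ) × (Fin q → ℝ)) :=
  { v | ∃ (X : Matrix (Fin (p + q)) (Fin (p + q)) ℂ) (hX : X.IsHermitian),
      v.1 = eigVec X hX ∧ ∀ i : Fin q, v.2 i = sval (blockTR p q X) (i : ℕ) }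

/-- The cone `S(p,q)`: triples `(s(X), s(X₁₂), s(X₂₁))`. -/
def coneS (p q : ℕ) : Set ((Fin (p + q) → ℝ) × (Fin q → ℝ) × (Fin q → ℝ)) :=
  { v | ∃ X : Matrix (Fin (p + q)) (Fin (p + q)) ℂ,
      (∀ i : Fin (p + q), v.1 i = sval X (i : ℕ)) ∧
      (∀ i : Fin q, v.2.1 i = sval (blockTR p q X) (i : ℕ)) ∧
      (∀ i : Fin q, v.2.2 i = sval (blockBL p q X) (i : ℕ)) }

/-- The cone `T(p,q)`: triples `(s(X), s(X₁₁), s(X₂₂))`. -/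
def coneT (p q : ℕ) : Set ((Fin (p + q) → ℝ) × (Fin p → ℝ) × (Fin q → ℝ)) :=
  { v | ∃ X : Matrix (Fin (p + q)) (Fin (p + q)) ℂ,
      (∀ i : Fin (p + q), v.1 i = sval X (i : ℕ)) ∧
      (∀ i : Fin p, v.2.1 i = sval (blockTL p q X) (i : ℕ)) ∧
      (∀ i : Fin q, v.2.2 i = sval (blockBR p q X) (i : ℕ)) }

/-- `μ(A) = (a_r − r ≥ … ≥ a₂ − 2 ≥ a₁ − 1)` as a decreasing real vector, for
`A = {a₁ < … < a_r}` a subset of `[n]` (0-based indexing internally). -/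
noncomputable def muVec {n r : ℕ} (A : Finset (Fin n)) (h : A.card = r) : Fin r → ℝ :=
  fun k => (((A.orderIsoOfFin h k.rev : Fin n) : ℕ) : ℝ) - ((k.rev : ℕ) : ℝ)

/-- `A^o = {ℓ + 1 − a : a ∈ A}` inside `[ℓ]`. -/
def opp {n : ℕ} (A : Finset (Fin n)) : Finset (Fin n) := A.image Fin.rev

/-- `|s|_{K ∩ [q]}` where `K ⊆ [n]`, `s ∈ ℝ^q` and `[q]` is viewed inside `[n]`. -/
noncomputable def sumRestr {n q : ℕ} (s : Fin q → ℝ) (K : Finset (Fin n)) : ℝ :=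
  ∑ i ∈ K, (if h : (i : ℕ) < q then s ⟨i, h⟩ else 0)

/-- The augmented matrix `Ŷ^{p,q} = [[0, Y], [Yᴴ, 0]]` of size `p + q`. -/
def hatM (p q : ℕ) (Y : Matrix (Fin p) (Fin q) ℂ) : Matrix (Fin (p + q)) (Fin (p + q)) ℂ :=
  Matrix.reindex finSumFinEquiv finSumFinEquiv (Matrix.fromBlocks 0 Y Yᴴ 0)

open Filter Topology Module

theorem finrank_map_of_injective {E F : Type*} [AddCommGroup E] [Module ℂ E]
    [AddCommGroup F] [Module ℂ F] {f : E →ₗ[ℂ] F} (hf : Function.Injective f)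
    (p : Submodule ℂ E) : finrank ℂ (p.map f) = finrank ℂ p :=
  (LinearEquiv.finrank_eq (Submodule.equivMapOfInjective f hf p)).symm

theorem exists_continuous_kernel_section {X E F : Type*} [TopologicalSpace X]
    [NormedAddCommGroup E] [NormedSpace ℂ E] [FiniteDimensional ℂ E]
    [NormedAddCommGroup F] [NormedSpace ℂ F] [FiniteDimensional ℂ F]
    (L : X → E →L[ℂ] F) (x₀ : X) (hL : ContinuousAt L x₀) :
    ∃ s : X → E →L[ℂ] E, ContinuousAt s x₀ ∧ s x₀ = 1 ∧ ∀ᶠ x in 𝓝 x₀,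
      finrank ℂ (L x).ker ≤ finrank ℂ (L x₀).ker ∧
      (finrank ℂ (L x₀).ker ≤ finrank ℂ (L x).ker →
        ∀ v, L x₀ v = 0 → L x (s x v) = 0) := by
  obtain ⟨R₀, hR₀⟩ := (L x₀ : E →ₗ[ℂ] F).rangeRestrict.exists_rightInverse_of_surjective
    (LinearMap.range_rangeRestrict _)
  obtain ⟨R₁, hR₁⟩ := LinearMap.exists_extend R₀
  set R : F →L[ℂ] E := LinearMap.toContinuousLinearMap R₁ with hR
  have hRL : ∀ e, L x₀ (R (L x₀ e)) = L x₀ e := by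
    intro e
    have h1 : R (L x₀ e) = R₀ ((L x₀ : E →ₗ[ℂ] F).rangeRestrict e) := by
      have := LinearMap.congr_fun hR₁ ((L x₀ : E →ₗ[ℂ] F).rangeRestrict e)
      simpa [hR] using this
    have h2 := LinearMap.congr_fun hR₀ ((L x₀ : E →ₗ[ℂ] F).rangeRestrict e)
    rw [h1]
    simpa using congrArg Subtype.val h2
  set Ψ : X → E →L[ℂ] E := fun x => 1 + R.comp (L x - L x₀) with hΨ
  have hΨ0 : Ψ x₀ = 1 := by simp [hΨ]
  have hΨc : ContinuousAt Ψ x₀ := by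
    have : ContinuousAt (fun x => R.comp (L x - L x₀)) x₀ :=
      continuousAt_const.clm_comp (hL.sub continuousAt_const)
    exact continuousAt_const.add this
  refine ⟨fun x => Ring.inverse (Ψ x), ?_, by simp [hΨ0], ?_⟩
  · have h1 : ContinuousAt Ring.inverse (Ψ x₀) := by
      rw [hΨ0]; exact NormedRing.inverse_continuousAt 1
    exact ContinuousAt.comp h1 hΨc
  have hunit : ∀ᶠ x in 𝓝 x₀, IsUnit (Ψ x) := by
    have : {y : E →L[ℂ] E | IsUnit y} ∈ 𝓝 (Ψ x₀) := by
      rw [hΨ0]; exact Units.isOpen.mem_nhds isUnit_one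
    exact hΨc this
  filter_upwards [hunit] with x hx
  have hinv : ∀ v, Ring.inverse (Ψ x) (Ψ x v) = v := fun v => by
    have := congrArg (fun T : E →L[ℂ] E => T v) (Ring.inverse_mul_cancel _ hx)
    simpa using this
  have hinj : Function.Injective (Ψ x : E →ₗ[ℂ] E) := fun a b h => by
    rw [← hinv a, ← hinv b]; exact congrArg _ h
  have hle : (L x).ker.map (Ψ x : E →ₗ[ℂ] E) ≤ (L x₀).ker := by
    rintro _ ⟨v, hv, rfl⟩
    have hv' : L x v = 0 := hv
    change L x₀ (Ψ x v) = 0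
    simp [hΨ, hv', hRL]
  have hfr : finrank ℂ ((L x).ker.map (Ψ x : E →ₗ[ℂ] E)) = finrank ℂ (L x).ker :=
    finrank_map_of_injective hinj _
  refine ⟨hfr ▸ Submodule.finrank_mono hle, fun hge v hv => ?_⟩
  have heq := Submodule.eq_of_le_of_finrank_le hle (hfr ▸ hge)
  have hv' : v ∈ (L x).ker.map (Ψ x : E →ₗ[ℂ] E) := by rw [heq]; exact hv
  obtain ⟨w, hw, rfl⟩ := hv'
  have : Ring.inverse (Ψ x) (Ψ x w) = w := hinv w
  change L x (Ring.inverse (Ψ x) (Ψ x w)) = 0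
  rw [this]; exact hw

section Filtered

variable {S : Type*} [NormedAddCommGroup S] [NormedSpace ℂ S] {m : ℕ}

/-- Maps `S → ℂᵐ` compatible with three filtrations `A j` of `S` and the three complete
flags of `ℂᵐ` cut out by the rows of the matrices `h j`. -/
def filtHom (A : Fin 3 → ℕ → Submodule ℂ S) (h : Fin 3 → Matrix (Fin m) (Fin m) ℂ) :
    Submodule ℂ (S →L[ℂ] (Fin m → ℂ)) where
  carrier := {φ | ∀ j (q : Fin m), ∀ a ∈ A j q, (h j *ᵥ φ a) q = 0}
  add_mem' := by
    intro φ ψ hφ hψ j q a ha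
    simp [Matrix.mulVec_add, hφ j q a ha, hψ j q a ha]
  zero_mem' := by
    intro j q a _
    simp
  smul_mem' := by
    intro c φ hφ j q a ha
    simp [Matrix.mulVec_smul, hφ j q a ha]

theorem mem_filtHom {A : Fin 3 → ℕ → Submodule ℂ S} {h : Fin 3 → Matrix (Fin m) (Fin m) ℂ}
    {φ : S →L[ℂ] (Fin m → ℂ)} :
    φ ∈ filtHom A h ↔ ∀ j (q : Fin m), ∀ a ∈ A j q, (h j *ᵥ φ a) q = 0 := Iff.rfl

/-- The map whose kernel is dual to the obstruction space of `filtHom`. -/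
def relMap (A : Fin 3 → ℕ → Submodule ℂ S) (h : Fin 3 → Matrix (Fin m) (Fin m) ℂ) :
    (∀ p : Fin 3 × Fin m, A p.1 p.2) →ₗ[ℂ] (Fin m → S) where
  toFun t := fun q' => ∑ p : Fin 3 × Fin m, h p.1 p.2 q' • (t p : S)
  map_add' t u := by
    ext q'
    simp [Finset.sum_add_distrib]
  map_smul' c t := by
    ext q'
    simp [Finset.smul_sum, smul_comm c]

theorem relMap_apply (A : Fin 3 → ℕ → Submodule ℂ S) (h : Fin 3 → Matrix (Fin m) (Fin m) ℂ)
    (t : ∀ p : Fin 3 × Fin m, A p.1 p.2) (q' : Fin m) :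
    relMap A h t q' = ∑ p : Fin 3 × Fin m, h p.1 p.2 q' • (t p : S) := rfl

/-- The image of three filtrations under three endomorphisms. -/
def moveFilt (A : Fin 3 → ℕ → Submodule ℂ S) (g : Fin 3 → S →L[ℂ] S) :
    Fin 3 → ℕ → Submodule ℂ S :=
  fun j q => (A j q).map (g j : S →ₗ[ℂ] S)

theorem mem_filtHom_moveFilt {A : Fin 3 → ℕ → Submodule ℂ S} {g : Fin 3 → S →L[ℂ] S}
    {h : Fin 3 → Matrix (Fin m) (Fin m) ℂ} {φ : S →L[ℂ] (Fin m → ℂ)} :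
    φ ∈ filtHom (moveFilt A g) h ↔ ∀ j (q : Fin m), ∀ a ∈ A j q, (h j *ᵥ φ (g j a)) q = 0 := by
  simp [mem_filtHom, moveFilt]

/-- The pairing of a compatible map with the image of `relMap` vanishes. -/
theorem sum_apply_relMap (A : Fin 3 → ℕ → Submodule ℂ S)
    (h : Fin 3 → Matrix (Fin m) (Fin m) ℂ) (t : ∀ p : Fin 3 × Fin m, A p.1 p.2)
    (φ : S →L[ℂ] (Fin m → ℂ)) :
    ∑ q', φ (relMap A h t q') q' = ∑ p : Fin 3 × Fin m, (h p.1 *ᵥ φ (t p)) p.2 := by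
  simp only [relMap_apply, map_sum, map_smul, Finset.sum_apply, Pi.smul_apply, smul_eq_mul,
    Matrix.mulVec, dotProduct]
  rw [Finset.sum_comm]

theorem finrank_filtHom_add [FiniteDimensional ℂ S] (A : Fin 3 → ℕ → Submodule ℂ S)
    (h : Fin 3 → Matrix (Fin m) (Fin m) ℂ) :
    finrank ℂ (filtHom A h) + ∑ p : Fin 3 × Fin m, finrank ℂ (A p.1 p.2) =
      m * finrank ℂ S + finrank ℂ (relMap A h).ker := by
  let e : (S →L[ℂ] (Fin m → ℂ)) →ₗ[ℂ] Dual ℂ (Fin m → S) :=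
    { toFun := fun φ => ∑ q, (LinearMap.proj q ∘ₗ (φ : S →ₗ[ℂ] (Fin m → ℂ))) ∘ₗ LinearMap.proj q
      map_add' := by intro φ ψ; ext; simp [Finset.sum_add_distrib]
      map_smul' := by intro c φ; ext; simp [Finset.mul_sum] }
  have he : ∀ φ x, e φ x = ∑ q, φ (x q) q := fun φ x => by
    simp [e, LinearMap.sum_apply]
  have hsingle : ∀ φ (s : S) (q : Fin m), e φ (Pi.single q s) = φ s q := fun φ s q => by
    rw [he, Finset.sum_eq_single q]
    · simp
    · intro b _ hb; simp [Pi.single_eq_of_ne hb]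
    · simp
  have hinj : Function.Injective e := by
    intro φ ψ hφψ
    ext s q
    rw [← hsingle φ, ← hsingle ψ, hφψ]
  have hmap : (filtHom A h).map e = (relMap A h).range.dualAnnihilator := by
    ext f
    rw [Submodule.mem_dualAnnihilator]
    constructor
    · rintro ⟨φ, hφ, rfl⟩ _ ⟨t, rfl⟩
      rw [he, sum_apply_relMap]
      exact Finset.sum_eq_zero fun p _ => hφ p.1 p.2 _ (t p).2
    · intro hf
      let φ : S →L[ℂ] (Fin m → ℂ) := LinearMap.toContinuousLinearMap
        (LinearMap.pi fun q => f ∘ₗ LinearMap.single ℂ (fun _ => S) q)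
      have hφf : e φ = f := by
        ext q s
        simp [hsingle, φ]
      refine ⟨φ, ?_, hφf⟩
      intro j q a ha
      have := hf _ ⟨Pi.single (j, q) ⟨a, ha⟩, rfl⟩
      rw [← hφf, he, sum_apply_relMap, Finset.sum_eq_single (j, q)] at this
      · simpa using this
      · intro b _ hb; simp [Pi.single_eq_of_ne hb]
      · simp
  have h1 := finrank_map_of_injective hinj (filtHom A h)
  rw [hmap] at h1
  have h2 := Subspace.finrank_add_finrank_dualAnnihilator_eq (relMap A h).range
  have h3 := LinearMap.finrank_range_add_finrank_ker (relMap A h)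
  rw [Module.finrank_pi_fintype] at h2 h3
  simp at h2
  omega

theorem moveFilt_one (A : Fin 3 → ℕ → Submodule ℂ S) : moveFilt A 1 = A := by
  funext j q
  exact Submodule.map_id _

/-- The defining equations of `filtHom (moveFilt A g) h`, as a linear map. -/
noncomputable def filtEqn [FiniteDimensional ℂ S] (A : Fin 3 → ℕ → Submodule ℂ S)
    (g : Fin 3 → S →L[ℂ] S) (h : Fin 3 → Matrix (Fin m) (Fin m) ℂ) :
    (S →L[ℂ] (Fin m → ℂ)) →L[ℂ] (∀ p : Fin 3 × Fin m, A p.1 p.2 →L[ℂ] ℂ) :=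
  LinearMap.toContinuousLinearMap
    { toFun := fun φ p => LinearMap.toContinuousLinearMap
        { toFun := fun a => (h p.1 *ᵥ φ (g p.1 a)) p.2
          map_add' := by intro a b; simp [Matrix.mulVec_add]
          map_smul' := by intro c a; simp [Matrix.mulVec_smul] }
      map_add' := by intro φ ψ; ext p a; simp [Matrix.mulVec_add]
      map_smul' := by intro c φ; ext p a; simp [Matrix.mulVec_smul] }

theorem filtEqn_apply [FiniteDimensional ℂ S] (A : Fin 3 → ℕ → Submodule ℂ S)
    (g : Fin 3 → S →L[ℂ] S) (h : Fin 3 → Matrix (Fin m) (Fin m) ℂ)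
    (φ : S →L[ℂ] (Fin m → ℂ)) (p : Fin 3 × Fin m) (a : A p.1 p.2) :
    filtEqn A g h φ p a = (h p.1 *ᵥ φ (g p.1 a)) p.2 := rfl

theorem ker_filtEqn [FiniteDimensional ℂ S] (A : Fin 3 → ℕ → Submodule ℂ S)
    (g : Fin 3 → S →L[ℂ] S) (h : Fin 3 → Matrix (Fin m) (Fin m) ℂ) :
    (filtEqn A g h).ker = filtHom (moveFilt A g) h := by
  ext φ
  rw [mem_filtHom_moveFilt]
  constructor
  · intro hφ j q a ha
    have hφ' : filtEqn A g h φ = 0 := hφ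
    rw [← filtEqn_apply A g h φ (j, q) ⟨a, ha⟩, hφ']
    rfl
  · intro hφ
    change filtEqn A g h φ = 0
    ext p a
    exact hφ p.1 p.2 a a.2

theorem continuous_filtEqn [FiniteDimensional ℂ S] (A : Fin 3 → ℕ → Submodule ℂ S) :
    Continuous fun x : (Fin 3 → S →L[ℂ] S) × (Fin 3 → Matrix (Fin m) (Fin m) ℂ) =>
      filtEqn A x.1 x.2 := by
  refine (continuous_clm_apply (𝕜 := ℂ) (E := S →L[ℂ] (Fin m → ℂ))
    (F := ∀ p : Fin 3 × Fin m, A p.1 p.2 →L[ℂ] ℂ)).2 fun φ => ?_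
  refine continuous_pi fun p => ?_
  refine continuous_clm_apply.2 fun a => ?_
  simp only [filtEqn_apply, Matrix.mulVec, dotProduct]
  fun_prop

theorem exists_continuous_filtHom_section [FiniteDimensional ℂ S]
    (A : Fin 3 → ℕ → Submodule ℂ S)
    (x₀ : (Fin 3 → S →L[ℂ] S) × (Fin 3 → Matrix (Fin m) (Fin m) ℂ)) :
    ∃ s : (Fin 3 → S →L[ℂ] S) × (Fin 3 → Matrix (Fin m) (Fin m) ℂ) →
        (S →L[ℂ] (Fin m → ℂ)) →L[ℂ] (S →L[ℂ] (Fin m → ℂ)),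
      ContinuousAt s x₀ ∧ s x₀ = 1 ∧ ∀ᶠ x in 𝓝 x₀,
      finrank ℂ (filtHom (moveFilt A x.1) x.2) ≤ finrank ℂ (filtHom (moveFilt A x₀.1) x₀.2) ∧
      (finrank ℂ (filtHom (moveFilt A x₀.1) x₀.2) ≤ finrank ℂ (filtHom (moveFilt A x.1) x.2) →
        ∀ φ ∈ filtHom (moveFilt A x₀.1) x₀.2, s x φ ∈ filtHom (moveFilt A x.1) x.2) := by
  obtain ⟨s, hs, hs0, hev⟩ := exists_continuous_kernel_section
    (E := S →L[ℂ] (Fin m → ℂ)) (F := ∀ p : Fin 3 × Fin m, A p.1 p.2 →L[ℂ] ℂ)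
    (fun x : (Fin 3 → S →L[ℂ] S) × (Fin 3 → Matrix (Fin m) (Fin m) ℂ) => filtEqn A x.1 x.2)
    x₀ (continuous_filtEqn A).continuousAt
  refine ⟨s, hs, hs0, ?_⟩
  filter_upwards [hev] with x hx
  rw [ker_filtEqn, ker_filtEqn] at hx
  refine ⟨hx.1, fun hle φ hφ => ?_⟩
  rw [← ker_filtEqn] at hφ ⊢
  exact hx.2 hle φ hφ

/-- Where `filtHom` has locally minimal dimension, compatible maps kill all relations. -/
theorem filtHom_apply_eq_zero [FiniteDimensional ℂ S] (A : Fin 3 → ℕ → Submodule ℂ S)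
    (h₀ : Fin 3 → Matrix (Fin m) (Fin m) ℂ)
    (hmin : ∀ᶠ h in 𝓝 h₀, finrank ℂ (filtHom A h₀) ≤ finrank ℂ (filtHom A h))
    {φ : S →L[ℂ] (Fin m → ℂ)} (hφ : φ ∈ filtHom A h₀)
    {t : ∀ p : Fin 3 × Fin m, A p.1 p.2} (ht : relMap A h₀ t = 0) (p : Fin 3 × Fin m) :
    φ (t p) = 0 := by
  obtain ⟨s, hs, hs0, hev⟩ := exists_continuous_filtHom_section A (1, h₀)
  simp only [moveFilt_one] at hev
  obtain ⟨j, q⟩ := p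
  funext q'
  let D : Fin 3 → Matrix (Fin m) (Fin m) ℂ := Pi.single j (Matrix.single q q' 1)
  let γ : ℂ → (Fin 3 → S →L[ℂ] S) × (Fin 3 → Matrix (Fin m) (Fin m) ℂ) :=
    fun z => (1, h₀ + z • D)
  have hγ : ContinuousAt γ 0 := by
    have : Continuous γ := by fun_prop
    exact this.continuousAt
  have hγ0 : γ 0 = (1, h₀) := by simp [γ]
  have hsγ : Tendsto (fun z => s (γ z) φ (t (j, q)) q') (𝓝[≠] 0) (𝓝 (φ (t (j, q)) q')) := by
    have h1 : ContinuousAt (fun z => s (γ z)) 0 := ContinuousAt.comp (by rwa [hγ0]) hγ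
    have h2 : ContinuousAt (fun z => s (γ z) φ (t (j, q)) q') 0 := by
      have := (h1.clm_apply (continuousAt_const (y := φ))).clm_apply
        (continuousAt_const (y := (t (j, q) : S)))
      exact (continuous_apply q').continuousAt.comp this
    have h3 := h2.tendsto
    simp only [hγ0, hs0] at h3
    exact h3.mono_left nhdsWithin_le_nhds
  have hzero : ∀ᶠ z in 𝓝[≠] (0 : ℂ), s (γ z) φ (t (j, q)) q' = 0 := by
    have e1 : ∀ᶠ z in 𝓝 (0 : ℂ), s (γ z) φ ∈ filtHom A (γ z).2 := by
      have hγ' : Tendsto γ (𝓝 0) (𝓝 (1, h₀)) := by rw [← hγ0]; exact hγ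
      have hγ2 : Tendsto (fun z => (γ z).2) (𝓝 0) (𝓝 h₀) :=
        (continuous_snd.tendsto (1, h₀)).comp hγ'
      filter_upwards [hγ'.eventually hev, hγ2.eventually hmin] with z hz1 hz2
      have := hz1.2
      simp only [γ, moveFilt_one] at this hz2
      rw [moveFilt_one] at this
      exact this hz2 φ hφ
    filter_upwards [e1.filter_mono nhdsWithin_le_nhds, self_mem_nhdsWithin] with z hz hz0
    set ψ := s (γ z) φ with hψ
    have k1 : ∑ p : Fin 3 × Fin m, ((γ z).2 p.1 *ᵥ ψ (t p)) p.2 = 0 :=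
      Finset.sum_eq_zero fun p _ => hz p.1 p.2 _ (t p).2
    have k2 : ∑ p : Fin 3 × Fin m, (h₀ p.1 *ᵥ ψ (t p)) p.2 = 0 := by
      rw [← sum_apply_relMap, ht]; simp
    have k3 : ∑ p : Fin 3 × Fin m, (D p.1 *ᵥ ψ (t p)) p.2 = ψ (t (j, q)) q' := by
      rw [Finset.sum_eq_single (j, q)]
      · simp [D, Matrix.single_mulVec]
      · rintro ⟨j', q''⟩ _ hb
        by_cases hj : j' = j
        · subst hj
          have : q'' ≠ q := fun h => hb (by rw [h])
          simp [D, Matrix.single_mulVec, Function.update_of_ne this]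
        · simp [D, Pi.single_eq_of_ne hj]
      · simp
    simp only [γ, Pi.add_apply, Pi.smul_apply, Matrix.add_mulVec, Matrix.smul_mulVec,
      Finset.sum_add_distrib, smul_eq_mul, ← Finset.mul_sum, k2, k3, zero_add] at k1
    exact (mul_eq_zero.mp k1).resolve_left hz0
  have h0 : Tendsto (fun z => s (γ z) φ (t (j, q)) q') (𝓝[≠] 0) (𝓝 0) :=
    tendsto_const_nhds.congr' (hzero.mono fun z hz => hz.symm)
  exact tendsto_nhds_unique hsγ h0

theorem exists_retraction [FiniteDimensional ℂ S] (p : Submodule ℂ S) :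
    ∃ π : S →L[ℂ] p, ∀ v : p, π v = v := by
  obtain ⟨f, hf⟩ := p.subtype.exists_leftInverse_of_injective p.ker_subtype
  exact ⟨LinearMap.toContinuousLinearMap f, fun v => LinearMap.congr_fun hf v⟩

theorem finrank_comap_subtype (p q : Submodule ℂ S) :
    finrank ℂ (q.comap p.subtype) = finrank ℂ (p ⊓ q : Submodule ℂ S) := by
  rw [← Submodule.map_comap_subtype, finrank_map_of_injective p.subtype_injective]

theorem exists_continuous_inf_ker_section [FiniteDimensional ℂ S]
    (B : Submodule ℂ S) (φ₀ : S →L[ℂ] (Fin m → ℂ)) :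
    ∃ s : (S →L[ℂ] (Fin m → ℂ)) → (φ₀.ker →L[ℂ] S),
      ContinuousAt s φ₀ ∧ (∀ v : φ₀.ker, (v : S) ∈ B → s φ₀ v = v) ∧ ∀ᶠ φ in 𝓝 φ₀,
      finrank ℂ (B ⊓ φ.ker : Submodule ℂ S) ≤ finrank ℂ (B ⊓ φ₀.ker : Submodule ℂ S) ∧
      (finrank ℂ (B ⊓ φ₀.ker : Submodule ℂ S) ≤ finrank ℂ (B ⊓ φ.ker : Submodule ℂ S) →
        ∀ v : φ₀.ker, (v : S) ∈ B → s φ v ∈ B ∧ φ (s φ v) = 0) := by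
  obtain ⟨s, hs, hs0, hev⟩ := exists_continuous_kernel_section
    (E := B) (F := Fin m → ℂ)
    (fun φ : S →L[ℂ] (Fin m → ℂ) => φ.comp B.subtypeL) φ₀
    (continuous_id.clm_comp continuous_const).continuousAt
  obtain ⟨π, hπ⟩ := exists_retraction B
  refine ⟨fun φ => (B.subtypeL.comp (s φ)).comp (π.comp (φ₀.ker.subtypeL)), ?_, ?_, ?_⟩
  · exact (continuousAt_const.clm_comp hs).clm_comp continuousAt_const
  · intro v hv
    have := hπ ⟨v, hv⟩
    simp only at this
    simp [hs0, this]
  · have hker : ∀ φ : S →L[ℂ] (Fin m → ℂ), finrank ℂ (φ.comp B.subtypeL).ker =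
        finrank ℂ (B ⊓ φ.ker : Submodule ℂ S) := fun φ => by
      rw [← finrank_comap_subtype]; rfl
    filter_upwards [hev] with φ hφ
    simp only [hker] at hφ
    refine ⟨hφ.1, fun hle v hv => ?_⟩
    have h1 := hφ.2 hle ⟨v, hv⟩ v.2
    have h2 : π (v : S) = ⟨v, hv⟩ := hπ ⟨v, hv⟩
    refine ⟨?_, ?_⟩
    · simp
    · simpa [h2] using h1

theorem exists_continuous_flag_section [FiniteDimensional ℂ S]
    {B : ℕ → Submodule ℂ S} (hB : Monotone B) (hBm : B m = ⊤) (φ₀ : S →L[ℂ] (Fin m → ℂ)) :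
    ∃ ρ : (S →L[ℂ] (Fin m → ℂ)) → (φ₀.ker →L[ℂ] S),
      ContinuousAt ρ φ₀ ∧ (∀ v, ρ φ₀ v = v) ∧ ∀ᶠ φ in 𝓝 φ₀,
      (∀ q ∈ Finset.range (m + 1), finrank ℂ (B q ⊓ φ.ker : Submodule ℂ S) ≤
        finrank ℂ (B q ⊓ φ₀.ker : Submodule ℂ S)) ∧
      ((∀ q ∈ Finset.range (m + 1), finrank ℂ (B q ⊓ φ₀.ker : Submodule ℂ S) ≤
        finrank ℂ (B q ⊓ φ.ker : Submodule ℂ S)) →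
        ∀ q ∈ Finset.range (m + 1), ∀ v : φ₀.ker, (v : S) ∈ B q →
          ρ φ v ∈ B q ∧ φ (ρ φ v) = 0) := by
  choose s hs hs0 hev using fun q => exists_continuous_inf_ker_section (m := m) (B q) φ₀
  choose π hπ using fun q => exists_retraction ((B q).comap φ₀.ker.subtype)
  let P : ℕ → φ₀.ker →L[ℂ] φ₀.ker := fun q => Submodule.subtypeL _ ∘L π q
  have hPmem : ∀ q v, ((P q v : φ₀.ker) : S) ∈ B q := fun q v => (π q v).2
  have hPid : ∀ q (v : φ₀.ker), (v : S) ∈ B q → P q v = v := fun q v hv =>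
    congrArg Subtype.val (hπ q ⟨v, hv⟩)
  let Q : ℕ → φ₀.ker →L[ℂ] φ₀.ker := fun q => if q = 0 then P 0 else P q - P (q - 1)
  have hQmem : ∀ q v, ((Q q v : φ₀.ker) : S) ∈ B q := by
    intro q v
    rcases Nat.eq_zero_or_pos q with rfl | hq
    · simpa [Q] using hPmem 0 v
    · simpa [Q, hq.ne'] using
        (B q).sub_mem (hPmem q v) (hB (Nat.sub_le q 1) (hPmem (q - 1) v))
  have hQzero : ∀ q r (v : φ₀.ker), r < q → (v : S) ∈ B r → Q q v = 0 := by
    intro q r v hr hv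
    have hq : q ≠ 0 := by omega
    simp [Q, hq, hPid q v (hB hr.le hv), hPid (q - 1) v (hB (by omega) hv)]
  have hQsum : ∀ N, ∑ q ∈ Finset.range (N + 1), Q q = P N := by
    intro N
    induction N with
    | zero => simp [Q]
    | succ N ih => rw [Finset.sum_range_succ, ih]; simp [Q]
  refine ⟨fun φ => ∑ q ∈ Finset.range (m + 1), (s q φ).comp (Q q), ?_, ?_, ?_⟩
  · refine tendsto_finsetSum _ fun q _ => ?_
    exact (hs q).clm_comp continuousAt_const
  · intro v
    have h1 : ∀ q, (s q φ₀).comp (Q q) v = (Q q v : S) := fun q => hs0 q _ (hQmem q v)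
    rw [_root_.sum_apply]
    simp only [h1]
    have h2 := congrArg (fun T : φ₀.ker →L[ℂ] φ₀.ker => ((T v : φ₀.ker) : S)) (hQsum m)
    simp only [_root_.sum_apply, Submodule.coe_sum] at h2
    rw [h2, hPid m v (by rw [hBm]; trivial)]
  · have hall : ∀ᶠ φ in 𝓝 φ₀, ∀ q ∈ Finset.range (m + 1), _ :=
      (Filter.eventually_all_finset _).2 fun q _ => hev q
    filter_upwards [hall] with φ hφ
    refine ⟨fun q hq => (hφ q hq).1, fun hle q hq v hv => ?_⟩
    have hterm : ∀ r ∈ Finset.range (m + 1),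
        (s r φ) (Q r v) ∈ B q ⊓ φ.ker := by
      intro r hr
      rcases lt_or_ge q r with hqr | hqr
      · rw [hQzero r q v hqr hv, map_zero]; exact Submodule.zero_mem _
      · have := (hφ r hr).2 (hle r hr) (Q r v) (hQmem r v)
        exact ⟨hB hqr this.1, this.2⟩
    have := Submodule.sum_mem _ hterm
    rw [_root_.sum_apply]
    exact ⟨this.1, this.2⟩

theorem exists_continuous_move [FiniteDimensional ℂ S]
    {B : Fin 3 → ℕ → Submodule ℂ S} (hB : ∀ j, Monotone (B j)) (hBm : ∀ j, B j m = ⊤)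
    {h₂ : Fin 3 → Matrix (Fin m) (Fin m) ℂ} {φ₂ : S →L[ℂ] (Fin m → ℂ)}
    (hφ₂ : φ₂ ∈ filtHom B h₂)
    (hmin : ∀ᶠ h in 𝓝 h₂, finrank ℂ (filtHom B h₂) ≤ finrank ℂ (filtHom B h))
    (hker : ∀ᶠ y in 𝓝 (h₂, φ₂), y.2 ∈ filtHom B y.1 →
      ∑ j, ∑ q ∈ Finset.range (m + 1), finrank ℂ (B j q ⊓ φ₂.ker : Submodule ℂ S) ≤
      ∑ j, ∑ q ∈ Finset.range (m + 1), finrank ℂ (B j q ⊓ y.2.ker : Submodule ℂ S)) :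
    ∃ G : (Fin 3 → φ₂.ker →L[ℂ] φ₂.ker) × (Fin 3 → Matrix (Fin m) (Fin m) ℂ) →
        (Fin 3 → S →L[ℂ] S),
      ContinuousAt G (1, h₂) ∧ G (1, h₂) = 1 ∧ ∀ᶠ x in 𝓝 (1, h₂),
        ∃ φ₁ ∈ filtHom (moveFilt B (G x)) x.2, ∃ σ : φ₂.ker →ₗ[ℂ] S, Function.Injective σ ∧
          ∀ j, ∀ q ≤ m,
            (moveFilt (fun j q => (B j q).comap φ₂.ker.subtype) x.1 j q).map σ =
              moveFilt B (G x) j q ⊓ φ₁.ker := by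
  set K := φ₂.ker with hK
  let X := (Fin 3 → K →L[ℂ] K) × (Fin 3 → Matrix (Fin m) (Fin m) ℂ)
  let x₀ : X := (1, h₂)
  obtain ⟨s, hs, hs0, hsev⟩ := exists_continuous_filtHom_section B (1, h₂)
  choose ρ hρ hρ0 hρev using fun j => exists_continuous_flag_section (hB j) (hBm j) φ₂
  obtain ⟨π, hπ⟩ := exists_retraction K
  let Φ : X → S →L[ℂ] (Fin m → ℂ) := fun x => s (1, x.2) φ₂
  have hΦ0 : Φ x₀ = φ₂ := by simp [Φ, x₀, hs0]
  have hΦ : ContinuousAt Φ x₀ := by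
    have h1 : ContinuousAt (fun x : X => ((1 : Fin 3 → S →L[ℂ] S), x.2)) x₀ := by fun_prop
    have h2 : ContinuousAt (fun x : X => s (1, x.2)) x₀ := ContinuousAt.comp (g := s) hs h1
    exact h2.clm_apply continuousAt_const
  have hΦt : Tendsto Φ (𝓝 x₀) (𝓝 φ₂) := by rw [← hΦ0]; exact hΦ
  let R : Fin 3 → X → K →L[ℂ] S := fun j x => ρ j (Φ x)
  have hR : ∀ j, ContinuousAt (R j) x₀ := fun j =>
    ContinuousAt.comp (g := ρ j) (by rw [hΦ0]; exact hρ j) hΦ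
  let C : S →L[ℂ] S := 1 - K.subtypeL.comp π
  have hCK : ∀ v : K, C v = 0 := fun v => by simp [C, hπ v]
  let E : Fin 3 → X → S →L[ℂ] S := fun j x => (R j x).comp π + C
  have hE0 : ∀ j, E j x₀ = 1 := fun j => by
    ext v
    have : R j x₀ (π v) = (π v : S) := by
      simp only [R, hΦ0]; exact hρ0 j _
    simp [E, C, this]
  have hEc : ∀ j, ContinuousAt (E j) x₀ := fun j =>
    ((hR j).clm_comp continuousAt_const).add continuousAt_const
  let G : X → Fin 3 → S →L[ℂ] S := fun x j =>
    ((R 0 x).comp ((x.1 j).comp π) + C) * Ring.inverse (E j x)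
  refine ⟨G, ?_, ?_, ?_⟩
  · refine tendsto_pi_nhds.2 fun j => ?_
    refine ContinuousAt.mul (f := fun x : X => (R 0 x).comp ((x.1 j).comp π) + C)
      (g := fun x : X => Ring.inverse (E j x)) ?_ ?_
    · refine ContinuousAt.add ((hR 0).clm_comp (ContinuousAt.clm_comp ?_ continuousAt_const))
        continuousAt_const
      exact ((continuous_apply j).comp continuous_fst).continuousAt
    · refine ContinuousAt.comp (g := Ring.inverse) ?_ (hEc j)
      rw [hE0]; exact NormedRing.inverse_continuousAt 1
  · funext j
    have h1 : (R 0 x₀).comp ((x₀.1 j).comp π) + C = E 0 x₀ := by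
      simp only [E, x₀]; rfl
    change ((R 0 x₀).comp ((x₀.1 j).comp π) + C) * Ring.inverse (E j x₀) = 1
    rw [h1, hE0, hE0]; simp
  have hunit : ∀ᶠ x in 𝓝 x₀, ∀ j, IsUnit (E j x) := by
    refine Filter.eventually_all.2 fun j => ?_
    have : {y : S →L[ℂ] S | IsUnit y} ∈ 𝓝 (E j x₀) := by
      rw [hE0]; exact Units.isOpen.mem_nhds isUnit_one
    exact hEc j this
  have hx2 : Tendsto (fun x : X => x.2) (𝓝 x₀) (𝓝 h₂) := by
    exact continuous_snd.continuousAt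
  have hx12 : Tendsto (fun x : X => ((1 : Fin 3 → S →L[ℂ] S), x.2)) (𝓝 x₀) (𝓝 (1, h₂)) := by
    have h1 : ContinuousAt (fun x : X => ((1 : Fin 3 → S →L[ℂ] S), x.2)) x₀ := by fun_prop
    exact h1
  filter_upwards [hunit, hx12.eventually hsev, hx2.eventually hmin,
    (hx2.prodMk_nhds hΦt).eventually hker,
    hΦt.eventually (Filter.eventually_all.2 hρev)] with x hxu hxs hxm hxk hxρ
  have hxs' := hxs.2
  simp only [moveFilt_one] at hxs'
  have hφ₁ : Φ x ∈ filtHom B x.2 := hxs' (by rw [moveFilt_one]; exact hxm) φ₂ hφ₂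
  have hle := hxk hφ₁
  have hge : ∀ j, ∀ q ∈ Finset.range (m + 1), finrank ℂ (B j q ⊓ φ₂.ker : Submodule ℂ S) ≤
      finrank ℂ (B j q ⊓ (Φ x).ker : Submodule ℂ S) := by
    have e1 := (Finset.sum_eq_sum_iff_of_le (fun j (_ : j ∈ Finset.univ) =>
      Finset.sum_le_sum (fun q hq => (hxρ j).1 q hq))).1
      (le_antisymm (Finset.sum_le_sum fun j _ => Finset.sum_le_sum (fun q hq => (hxρ j).1 q hq))
        hle)
    intro j q hq
    have e2 := (Finset.sum_eq_sum_iff_of_le (fun q hq => (hxρ j).1 q hq)).1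
      (e1 j (Finset.mem_univ _))
    exact (e2 q hq).ge
  have hRmem : ∀ j, ∀ q ≤ m, ∀ v : K, (v : S) ∈ B j q → R j x v ∈ B j q ∧ Φ x (R j x v) = 0 :=
    fun j q hq v hv => (hxρ j).2 (hge j) q (Finset.mem_range.2 (by omega)) v hv
  have hRker : ∀ j (v : K), Φ x (R j x v) = 0 := fun j v =>
    (hRmem j m le_rfl v (by rw [hBm]; trivial)).2
  have hinv : ∀ j w, Ring.inverse (E j x) (E j x w) = w := fun j w => by
    simpa using congrArg (fun T : S →L[ℂ] S => T w) (Ring.inverse_mul_cancel _ (hxu j))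
  have hinv' : ∀ j w, E j x (Ring.inverse (E j x) w) = w := fun j w => by
    simpa using congrArg (fun T : S →L[ℂ] S => T w) (Ring.mul_inverse_cancel _ (hxu j))
  have hER : ∀ j (v : K), E j x v = R j x v := fun j v => by
    simp [E, hCK, hπ v]
  have hRinj : ∀ j, Function.Injective (R j x : K →ₗ[ℂ] S) := fun j v w hvw => by
    have : R j x v = R j x w := hvw
    rw [← hER, ← hER] at this
    have := congrArg (fun w : S => Ring.inverse (E j x) w) this
    rw [hinv, hinv] at this
    exact Subtype.ext this
  have hGR : ∀ j (v : K), G x j (R j x v) = R 0 x (x.1 j v) := fun j v => by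
    change ((R 0 x).comp ((x.1 j).comp π) + C) (Ring.inverse (E j x) (R j x v)) = _
    rw [← hER, hinv]
    simp [hCK, hπ v]
  have hφG : ∀ j b, Φ x (G x j b) = Φ x b := fun j b => by
    conv_rhs => rw [← hinv' j b]
    change Φ x (((R 0 x).comp ((x.1 j).comp π) + C) (Ring.inverse (E j x) b)) = _
    simp [E, hRker]
  refine ⟨Φ x, ?_, R 0 x, hRinj 0, ?_⟩
  · rw [mem_filtHom_moveFilt]
    intro j q a ha
    rw [hφG]; exact hφ₁ j q a ha
  · intro j q hq
    have hmapR : ((B j q).comap K.subtype).map (R j x : K →ₗ[ℂ] S) = B j q ⊓ (Φ x).ker := by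
      refine Submodule.eq_of_le_of_finrank_le ?_ ?_
      · rintro _ ⟨v, hv, rfl⟩
        exact hRmem j q hq v hv
      · rw [finrank_map_of_injective (hRinj j), finrank_comap_subtype, inf_comm K]
        exact (hxρ j).1 q (Finset.mem_range.2 (by omega))
    apply le_antisymm
    · rintro _ ⟨_, ⟨v, hv, rfl⟩, rfl⟩
      refine ⟨⟨R j x v, (hRmem j q hq v hv).1, hGR j v⟩, hRker 0 _⟩
    · rintro _ ⟨⟨b, hb, rfl⟩, hb'⟩
      have hb2 : Φ x b = 0 := by rw [← hφG j b]; exact hb'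
      have : b ∈ ((B j q).comap K.subtype).map (R j x : K →ₗ[ℂ] S) := by
        rw [hmapR]; exact ⟨hb, hb2⟩
      obtain ⟨v, hv, rfl⟩ := this
      exact ⟨x.1 j v, ⟨v, hv, rfl⟩, (hGR j v).symm⟩

theorem moveFilt_moveFilt (A : Fin 3 → ℕ → Submodule ℂ S) (g G : Fin 3 → S →L[ℂ] S) :
    moveFilt (moveFilt A g) G = moveFilt A (G * g) := by
  funext j q
  exact (Submodule.map_comp (g j : S →ₗ[ℂ] S) (G j : S →ₗ[ℂ] S) (A j q)).symm

theorem exists_mem_forall_natValued_le {α : Type*} (f : α → ℕ) {s : Set α} (hs : s.Nonempty) :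
    ∃ x ∈ s, ∀ y ∈ s, f x ≤ f y :=
  ⟨Function.argminOn f s hs, Function.argminOn_mem f s hs,
    fun _ hy => Function.argminOn_le f s hy⟩

theorem moveFilt_eq_top {A : Fin 3 → ℕ → Submodule ℂ S} {g : Fin 3 → S →L[ℂ] S} {j : Fin 3}
    {q : ℕ} (hA : A j q = ⊤) (hg : IsUnit (g j)) : moveFilt A g j q = ⊤ := by
  rw [moveFilt, hA, Submodule.map_top, LinearMap.range_eq_top]
  intro v
  refine ⟨Ring.inverse (g j) v, ?_⟩
  simpa using congrArg (fun T : S →L[ℂ] S => T v) (Ring.mul_inverse_cancel _ hg)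

end Filtered

universe u

theorem frequently_exists_destabilizing {m : ℕ} (n : ℕ) : ∀ (S : Type u) [NormedAddCommGroup S]
    [NormedSpace ℂ S] [FiniteDimensional ℂ S], finrank ℂ S = n →
    ∀ (A : Fin 3 → ℕ → Submodule ℂ S), (∀ j, Monotone (A j)) → (∀ j, A j m = ⊤) →
    ∀ h₀ : Fin 3 → Matrix (Fin m) (Fin m) ℂ,
    (∀ᶠ x in 𝓝 ((1 : Fin 3 → S →L[ℂ] S), h₀),
      ¬ Function.Injective (relMap (moveFilt A x.1) x.2)) →
    ∃ᶠ g in 𝓝 (1 : Fin 3 → S →L[ℂ] S), ∃ U : Submodule ℂ S,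
      m * finrank ℂ U < ∑ p : Fin 3 × Fin m,
        finrank ℂ (moveFilt A g p.1 p.2 ⊓ U : Submodule ℂ S) := by
  induction n using Nat.strong_induction_on with | _ n ih
  intro S _ _ _ hn A hA hAm h₀ H
  rw [Filter.frequently_iff]
  intro N hN
  have hunit : ∀ᶠ g in 𝓝 (1 : Fin 3 → S →L[ℂ] S), ∀ j, IsUnit (g j) := by
    refine Filter.eventually_all.2 fun j => ?_
    have h1 : ContinuousAt (fun g : Fin 3 → S →L[ℂ] S => g j) 1 :=
      (continuous_apply j).continuousAt
    exact h1 (Units.isOpen.mem_nhds (x := (1 : S →L[ℂ] S)) isUnit_one)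
  have hfst : Tendsto (fun x : (Fin 3 → S →L[ℂ] S) × (Fin 3 → Matrix (Fin m) (Fin m) ℂ) => x.1)
      (𝓝 (1, h₀)) (𝓝 1) := continuous_fst.continuousAt
  have hev := H.and ((hfst.eventually hunit).and (hfst.eventually hN))
  obtain ⟨u, v, hu, h1u, hv, h0v, huv⟩ := mem_nhds_prod_iff'.1 hev
  obtain ⟨⟨g₁, h₁⟩, ⟨hg₁, hh₁⟩, hmin⟩ := exists_mem_forall_natValued_le
    (fun x : (Fin 3 → S →L[ℂ] S) × (Fin 3 → Matrix (Fin m) (Fin m) ℂ) =>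
      finrank ℂ (filtHom (moveFilt A x.1) x.2)) (s := u ×ˢ v) ⟨(1, h₀), h1u, h0v⟩
  simp only at hmin hg₁ hh₁
  obtain ⟨hni, hgu, hgN⟩ := huv (Set.mk_mem_prod hg₁ hh₁)
  simp only at hni hgu hgN
  set B := moveFilt A g₁ with hBdef
  set c := finrank ℂ (filtHom B h₁) with hc
  have hB : ∀ j, Monotone (B j) := fun j q q' hq => Submodule.map_mono (hA j hq)
  have hBm : ∀ j, B j m = ⊤ := fun j => moveFilt_eq_top (hAm j) (hgu j)
  by_cases hc0 : c = 0
  · refine ⟨g₁, hgN, ⊤, ?_⟩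
    have h1 := finrank_filtHom_add B h₁
    have h2 : (relMap B h₁).ker ≠ ⊥ := fun h => hni (LinearMap.ker_eq_bot.1 h)
    have h3 : 0 < finrank ℂ (relMap B h₁).ker := Submodule.one_le_finrank_iff.2 h2
    have h4 : ∑ p : Fin 3 × Fin m, finrank ℂ (B p.1 p.2 ⊓ ⊤ : Submodule ℂ S) =
        ∑ p : Fin 3 × Fin m, finrank ℂ (B p.1 p.2) :=
      Finset.sum_congr rfl fun p _ => by rw [inf_top_eq]
    rw [finrank_top, ← hBdef, h4]
    omega
  have hBh : ∀ h ∈ v, c ≤ finrank ℂ (filtHom B h) := fun h hh =>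
    hmin (g₁, h) ⟨hg₁, hh⟩
  obtain ⟨φ', hφ', hφ'0⟩ := Submodule.exists_mem_ne_zero_of_ne_bot
    (p := filtHom B h₁) (fun h => hc0 (by rw [hc, h, finrank_bot]))
  obtain ⟨⟨h₂, φ₂⟩, ⟨hh₂, hc₂, hφ₂, hφ₂0⟩, hmin₂⟩ := exists_mem_forall_natValued_le
    (fun y : (Fin 3 → Matrix (Fin m) (Fin m) ℂ) × (S →L[ℂ] (Fin m → ℂ)) =>
      ∑ j, ∑ q ∈ Finset.range (m + 1), finrank ℂ (B j q ⊓ y.2.ker : Submodule ℂ S))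
    (s := {y | y.1 ∈ v ∧ finrank ℂ (filtHom B y.1) ≤ c ∧ y.2 ∈ filtHom B y.1 ∧ y.2 ≠ 0})
    ⟨(h₁, φ'), hh₁, le_rfl, hφ', hφ'0⟩
  simp only at hh₂ hc₂ hφ₂ hφ₂0 hmin₂
  obtain ⟨s, -, -, hsev⟩ := exists_continuous_filtHom_section B (1, h₂)
  rw [moveFilt_one] at hsev
  replace hsev := hsev.mono fun x hx => hx.1.trans hc₂
  have hone : Tendsto (fun h : Fin 3 → Matrix (Fin m) (Fin m) ℂ =>
      ((1 : Fin 3 → S →L[ℂ] S), h)) (𝓝 h₂) (𝓝 (1, h₂)) :=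
    (Continuous.prodMk_right _).continuousAt
  obtain ⟨G, hG, hG0, hGev⟩ := exists_continuous_move hB hBm hφ₂
    (by filter_upwards [hv.mem_nhds hh₂] with h hh using hc₂.trans (hBh h hh)) (by
      have e1 : Tendsto Prod.fst (𝓝 (h₂, φ₂)) (𝓝 h₂) := continuous_fst.continuousAt
      have e2 : Tendsto Prod.snd (𝓝 (h₂, φ₂)) (𝓝 φ₂) := continuous_snd.continuousAt
      filter_upwards [e1.eventually (hv.mem_nhds hh₂), e1.eventually (hone.eventually hsev),
        e2.eventually (isOpen_ne.mem_nhds hφ₂0)] with y hy1 hy2 hy3 hy4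
      rw [moveFilt_one] at hy2
      exact hmin₂ y ⟨hy1, hy2, hy4, hy3⟩)
  have hKlt : finrank ℂ φ₂.ker < n := by
    rw [← hn]
    refine Submodule.finrank_lt fun h => hφ₂0 ?_
    ext1 w
    have : w ∈ φ₂.ker := by rw [h]; trivial
    exact this
  set R : Fin 3 → ℕ → Submodule ℂ φ₂.ker := fun j q => (B j q).comap φ₂.ker.subtype with hR
  have hGt : Tendsto G (𝓝 (1, h₂)) (𝓝 1) := by rw [← hG0]; exact hG
  have hGu : ∀ᶠ x in 𝓝 (1, h₂), G x * g₁ ∈ u := by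
    have h1 : Tendsto (fun x => G x * g₁) (𝓝 (1, h₂)) (𝓝 (1 * g₁)) :=
      hGt.mul tendsto_const_nhds
    rw [one_mul] at h1
    exact h1.eventually (hu.mem_nhds hg₁)
  have hsnd : Tendsto (fun x : (Fin 3 → φ₂.ker →L[ℂ] φ₂.ker) ×
      (Fin 3 → Matrix (Fin m) (Fin m) ℂ) => x.2) (𝓝 (1, h₂)) (𝓝 h₂) :=
    continuous_snd.continuousAt
  have hKni : ∀ᶠ x in 𝓝 ((1 : Fin 3 → φ₂.ker →L[ℂ] φ₂.ker), h₂),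
      ¬ Function.Injective (relMap (moveFilt R x.1) x.2) := by
    filter_upwards [hGev, hGu, hsnd.eventually (hv.mem_nhds hh₂),
      (hGt.prodMk_nhds hsnd).eventually hsev] with x hx hxu hxv hxs hinj
    obtain ⟨φ₁, hφ₁, σ, hσ, hmap⟩ := hx
    have hA' : moveFilt B (G x) = moveFilt A (G x * g₁) := moveFilt_moveFilt A g₁ (G x)
    have hnoninj : ¬ Function.Injective (relMap (moveFilt B (G x)) x.2) := by
      rw [hA']; exact (huv (Set.mk_mem_prod hxu hxv)).1
    refine hnoninj (LinearMap.ker_eq_bot.1 ((Submodule.eq_bot_iff _).2 fun t ht => ?_))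
    have hkill := fun p => filtHom_apply_eq_zero (moveFilt B (G x)) x.2 (by
      filter_upwards [hv.mem_nhds hxv] with h hh
      refine hxs.trans ?_
      rw [hA']
      exact hmin (G x * g₁, h) ⟨hxu, hh⟩) hφ₁ ht p
    have hmem : ∀ p : Fin 3 × Fin m, ∃ t' : moveFilt R x.1 p.1 p.2, σ t' = t p := fun p => by
      have h1 : (t p : S) ∈ (moveFilt R x.1 p.1 p.2).map σ := by
        rw [hmap p.1 p.2 p.2.2.le]; exact ⟨(t p).2, hkill p⟩
      obtain ⟨w, hw, hw'⟩ := h1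
      exact ⟨⟨w, hw⟩, hw'⟩
    choose t' ht' using hmem
    have hrel : relMap (moveFilt R x.1) x.2 t' = 0 := by
      funext q'
      apply hσ
      have h2 := congrFun (LinearMap.mem_ker.1 ht) q'
      rw [relMap_apply] at h2 ⊢
      simpa [map_sum, ht'] using h2
    have ht'0 : t' = 0 := hinj (by rw [hrel, map_zero])
    funext p
    apply Subtype.ext
    rw [← ht' p, ht'0]
    simp
  have hfreq := ih _ hKlt φ₂.ker rfl R (fun j q q' hq => Submodule.comap_mono (hB j hq))
    (fun j => by simp [hR, hBm]) h₂ hKni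
  have hone' : Tendsto (fun k : Fin 3 → φ₂.ker →L[ℂ] φ₂.ker => (k, h₂)) (𝓝 1) (𝓝 (1, h₂)) :=
    (Continuous.prodMk_left _).continuousAt
  obtain ⟨k, ⟨U', hU'⟩, hku, hkev⟩ := (hfreq.and_eventually
    ((hone'.eventually hGu).and (hone'.eventually hGev))).exists
  obtain ⟨φ₁, hφ₁, σ, hσ, hmap⟩ := hkev
  refine ⟨G (k, h₂) * g₁, (huv (Set.mk_mem_prod hku hh₂)).2.2, U'.map σ, ?_⟩
  rw [finrank_map_of_injective hσ]
  refine hU'.trans_le (Finset.sum_le_sum fun p _ => ?_)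
  rw [← finrank_map_of_injective hσ, ← moveFilt_moveFilt]
  refine Submodule.finrank_mono ((Submodule.map_inf_le σ).trans (inf_le_inf ?_ le_rfl))
  rw [hmap p.1 p.2 p.2.2.le]
  exact inf_le_left

open scoped InnerProductSpace in
theorem one_sub_mul_sq_le_sum_norm_inner_sq {S : Type*} [NormedAddCommGroup S]
    [InnerProductSpace ℂ S] {ι : Type*} [Fintype ι] [DecidableEq ι] (e : OrthonormalBasis ι ℂ S)
    (s : Finset ι) {g : S →L[ℂ] S} {δ : ℝ} (hδ : δ ≤ 1 / 2) (hg : ‖g - 1‖ ≤ δ)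
    {d : S} (hd : d ∈ (Submodule.span ℂ (e '' s)).map (g : S →ₗ[ℂ] S)) :
    (1 - 4 * δ ^ 2) * ‖d‖ ^ 2 ≤ ∑ i ∈ s, ‖⟪e i, d⟫_ℂ‖ ^ 2 := by
  obtain ⟨a, ha, rfl⟩ := hd
  change (1 - 4 * δ ^ 2) * ‖g a‖ ^ 2 ≤ ∑ i ∈ s, ‖⟪e i, g a⟫_ℂ‖ ^ 2
  have h0 : 0 ≤ δ := (norm_nonneg _).trans hg
  have h1 : ‖g a - a‖ ≤ δ * ‖a‖ := by
    have : g a - a = (g - 1) a := by simp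
    rw [this]
    exact ((g - 1).le_opNorm a).trans (by gcongr)
  have h2 : ‖a‖ ≤ 2 * ‖g a‖ := by
    have h3 : ‖a‖ ≤ ‖g a‖ + ‖g a - a‖ := by
      have := norm_sub_le (g a) (g a - a)
      simpa using this
    nlinarith [norm_nonneg a]
  have h4 : ∀ i ∉ s, ⟪e i, a⟫_ℂ = 0 := by
    intro i hi
    have : Submodule.span ℂ (e '' s) ≤ (LinearMap.ker (innerSL ℂ (e i) : S →ₗ[ℂ] ℂ)) := by
      rw [Submodule.span_le]
      rintro _ ⟨k, hk, rfl⟩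
      have hki : i ≠ k := fun h => hi (h ▸ hk)
      simpa using e.orthonormal.inner_eq_zero hki
    simpa using this ha
  have h5 : ∑ i ∈ sᶜ, ‖⟪e i, g a⟫_ℂ‖ ^ 2 ≤ ‖g a - a‖ ^ 2 := by
    rw [← e.sum_sq_norm_inner_right (g a - a)]
    calc ∑ i ∈ sᶜ, ‖⟪e i, g a⟫_ℂ‖ ^ 2 = ∑ i ∈ sᶜ, ‖⟪e i, g a - a⟫_ℂ‖ ^ 2 :=
          Finset.sum_congr rfl fun i hi => by
            rw [inner_sub_right, h4 i (Finset.mem_compl.1 hi), sub_zero]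
      _ ≤ _ := Finset.sum_le_sum_of_subset_of_nonneg (Finset.subset_univ _)
          fun _ _ _ => sq_nonneg _
  have h6 := e.sum_sq_norm_inner_right (g a)
  rw [← Finset.sum_add_sum_compl s] at h6
  have h7 : ‖g a - a‖ ^ 2 ≤ 4 * δ ^ 2 * ‖g a‖ ^ 2 := by
    have h8 : ‖g a - a‖ ≤ δ * (2 * ‖g a‖) := h1.trans (by gcongr)
    calc ‖g a - a‖ ^ 2 ≤ (δ * (2 * ‖g a‖)) ^ 2 := by gcongr
      _ = _ := by ring
  linarith

open scoped InnerProductSpace in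
theorem eventually_sum_finrank_inf_le {S : Type*} [NormedAddCommGroup S]
    [InnerProductSpace ℂ S] [FiniteDimensional ℂ S] {ι : Type*} [Fintype ι] [DecidableEq ι]
    (m : ℕ) (e : Fin 3 → OrthonormalBasis ι ℂ S) (x : Fin 3 → ι → ℕ) (hx : ∀ j i, x j i ≤ m)
    (hsum : ∀ w : S, ∑ j, ∑ i, (x j i : ℝ) * ‖⟪e j i, w⟫_ℂ‖ ^ 2 = m * ‖w‖ ^ 2) :
    ∀ᶠ g in 𝓝 (1 : Fin 3 → S →L[ℂ] S), ∀ U : Submodule ℂ S,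
      ∑ p : Fin 3 × Fin m, finrank ℂ (moveFilt (fun j q => Submodule.span ℂ
        (e j '' ((Finset.univ.filter fun i => m ≤ q + x j i : Finset ι) : Set ι))) g p.1 p.2 ⊓ U :
          Submodule ℂ S) ≤ m * finrank ℂ U := by
  set s : Fin 3 → ℕ → Finset ι := fun j q => Finset.univ.filter fun i => m ≤ q + x j i with hs
  set M : ℕ := 3 * m * finrank ℂ S with hM
  set δ : ℝ := 1 / (2 * (M + 1)) with hδ
  have hδ0 : 0 < δ := by positivity
  have hδ1 : δ ≤ 1 / 2 := by
    rw [hδ]; apply one_div_le_one_div_of_le <;> [norm_num; linarith [Nat.cast_nonneg (α := ℝ) M]]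
  have hδM : 4 * δ ^ 2 * M < 1 := by
    have : 2 * δ * (M + 1) = 1 := by rw [hδ]; field_simp
    nlinarith [Nat.cast_nonneg (α := ℝ) M]
  have hev : ∀ᶠ g in 𝓝 (1 : Fin 3 → S →L[ℂ] S), ∀ j, ‖g j - 1‖ ≤ δ := by
    refine Filter.eventually_all.2 fun j => ?_
    have h1 : ContinuousAt (fun g : Fin 3 → S →L[ℂ] S => ‖g j - 1‖) 1 :=
      (((continuous_apply j).sub continuous_const).norm).continuousAt
    have h2 : (fun g : Fin 3 → S →L[ℂ] S => ‖g j - 1‖) 1 < δ := by simpa using hδ0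
    exact (h1.eventually (gt_mem_nhds h2)).mono fun g hg => le_of_lt hg
  filter_upwards [hev] with g hg U
  have hproj : ∀ (D : Submodule ℂ S) (v : S), ‖D.orthogonalProjectionOnto v‖ ^ 2 =
      ∑ l, ‖⟪(stdOrthonormalBasis ℂ D l : S), v⟫_ℂ‖ ^ 2 := fun D v => by
    rw [← (stdOrthonormalBasis ℂ D).sum_sq_norm_inner_right]
    simp
  have hmono : ∀ (D : Submodule ℂ S), D ≤ U → ∀ v, ‖D.orthogonalProjectionOnto v‖ ^ 2 ≤
      ‖U.orthogonalProjectionOnto v‖ ^ 2 := fun D hD v => by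
    rw [← Submodule.orthogonalProjectionOnto_starProjection_of_le hD]
    gcongr
    exact Submodule.norm_orthogonalProjectionOnto_apply_le _ _
  have hcount : ∀ j i, ∑ q : Fin m, (if m ≤ q + x j i then (1 : ℝ) else 0) = x j i := by
    intro j i
    rw [Fin.sum_univ_eq_sum_range (fun q => if m ≤ q + x j i then (1 : ℝ) else 0) m,
      ← Finset.sum_filter]
    have : Finset.filter (fun q => m ≤ q + x j i) (Finset.range m) = Finset.Ico (m - x j i) m := by
      ext q; simp; omega
    rw [this]
    simp [Nat.sub_sub_self (hx j i)]
  have htotal : ∀ w : S, ∑ p : Fin 3 × Fin m, ∑ i ∈ s p.1 p.2, ‖⟪e p.1 i, w⟫_ℂ‖ ^ 2 =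
      m * ‖w‖ ^ 2 := fun w => by
    rw [← hsum w, Fintype.sum_prod_type]
    refine Finset.sum_congr rfl fun j _ => ?_
    simp only [hs, Finset.sum_filter]
    rw [Finset.sum_comm]
    refine Finset.sum_congr rfl fun i _ => ?_
    rw [← hcount, Finset.sum_mul]
    exact Finset.sum_congr rfl fun q _ => by split_ifs <;> simp
  have hU : ∑ p : Fin 3 × Fin m, ∑ i ∈ s p.1 p.2, ‖U.orthogonalProjectionOnto (e p.1 i)‖ ^ 2 =
      m * finrank ℂ U := by
    simp only [hproj]
    calc _ = ∑ l, ∑ p : Fin 3 × Fin m, ∑ i ∈ s p.1 p.2,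
          ‖⟪e p.1 i, (stdOrthonormalBasis ℂ U l : S)⟫_ℂ‖ ^ 2 := by
          rw [Finset.sum_comm]
          refine Finset.sum_congr rfl fun p _ => ?_
          rw [Finset.sum_comm]
          exact Finset.sum_congr rfl fun l _ => Finset.sum_congr rfl fun i _ => by
            rw [norm_inner_symm]
      _ = ∑ l : Fin (finrank ℂ U), (m : ℝ) := by
          refine Finset.sum_congr rfl fun l _ => ?_
          rw [htotal]
          have : ‖(stdOrthonormalBasis ℂ U l : S)‖ = 1 := (stdOrthonormalBasis ℂ U).norm_eq_one l
          rw [this]; simp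
      _ = _ := by simp [mul_comm]
  set D : Fin 3 × Fin m → Submodule ℂ S := fun p =>
    moveFilt (fun j q => Submodule.span ℂ (e j '' (s j q : Set ι))) g p.1 p.2 ⊓ U with hD
  have hDle : ∀ p, (1 - 4 * δ ^ 2) * finrank ℂ (D p) ≤
      ∑ i ∈ s p.1 p.2, ‖U.orthogonalProjectionOnto (e p.1 i)‖ ^ 2 := fun p => by
    calc (1 - 4 * δ ^ 2) * finrank ℂ (D p)
        = ∑ l : Fin (finrank ℂ (D p)), (1 - 4 * δ ^ 2) *
            ‖(stdOrthonormalBasis ℂ (D p) l : S)‖ ^ 2 := by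
          have : ∀ l, ‖(stdOrthonormalBasis ℂ (D p) l : S)‖ = 1 :=
            (stdOrthonormalBasis ℂ (D p)).norm_eq_one
          simp [this]; ring
      _ ≤ ∑ l, ∑ i ∈ s p.1 p.2, ‖⟪e p.1 i, (stdOrthonormalBasis ℂ (D p) l : S)⟫_ℂ‖ ^ 2 :=
          Finset.sum_le_sum fun l _ => one_sub_mul_sq_le_sum_norm_inner_sq (e p.1) (s p.1 p.2)
            hδ1 (hg p.1) (stdOrthonormalBasis ℂ (D p) l).2.1
      _ = ∑ i ∈ s p.1 p.2, ‖(D p).orthogonalProjectionOnto (e p.1 i)‖ ^ 2 := by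
          rw [Finset.sum_comm]
          refine Finset.sum_congr rfl fun i _ => ?_
          rw [hproj]
          exact Finset.sum_congr rfl fun l _ => by rw [norm_inner_symm]
      _ ≤ _ := Finset.sum_le_sum fun i _ => hmono _ inf_le_right _
  have hbound : ∑ p, finrank ℂ (D p) ≤ M := by
    calc ∑ p, finrank ℂ (D p) ≤ ∑ p : Fin 3 × Fin m, finrank ℂ S :=
          Finset.sum_le_sum fun p _ => Submodule.finrank_le _
      _ = M := by simp [hM]
  change ∑ p, finrank ℂ (D p) ≤ m * finrank ℂ U
  by_contra hlt
  have h1 : ((m * finrank ℂ U : ℕ) : ℝ) + 1 ≤ ((∑ p, finrank ℂ (D p) : ℕ) : ℝ) := by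
    exact_mod_cast Nat.lt_of_not_le hlt
  have h2 : (1 - 4 * δ ^ 2) * ((∑ p, finrank ℂ (D p) : ℕ) : ℝ) ≤ m * finrank ℂ U := by
    rw [← hU]; push_cast; rw [Finset.mul_sum]
    exact Finset.sum_le_sum fun p _ => hDle p
  have h3 : ((∑ p, finrank ℂ (D p) : ℕ) : ℝ) ≤ M := by exact_mod_cast hbound
  push_cast at h1 h2 h3
  nlinarith [sq_nonneg δ]

section Filtered

variable {S : Type*} [NormedAddCommGroup S] [NormedSpace ℂ S] {m : ℕ}

theorem trace_eq_sum_trace_proj_comp_single {ι : Type*} [Fintype ι] [DecidableEq ι]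
    {V : ι → Type*} [∀ i, AddCommGroup (V i)] [∀ i, Module ℂ (V i)]
    [∀ i, FiniteDimensional ℂ (V i)] (f : (∀ i, V i) →ₗ[ℂ] (∀ i, V i)) :
    LinearMap.trace ℂ _ f =
      ∑ i, LinearMap.trace ℂ _ (LinearMap.proj i ∘ₗ f ∘ₗ LinearMap.single ℂ V i) := by
  have h1 : f = ∑ i, (f ∘ₗ LinearMap.single ℂ V i) ∘ₗ LinearMap.proj i := by
    refine LinearMap.ext fun v => ?_
    simp only [LinearMap.sum_apply, LinearMap.comp_apply, LinearMap.proj_apply, ← map_sum]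
    congr 1
    exact (Finset.univ_sum_single v).symm
  conv_lhs => rw [h1, map_sum]
  exact Finset.sum_congr rfl fun i _ => LinearMap.trace_comp_comm' _ _

theorem exists_comp_eq_relMap_mul [FiniteDimensional ℂ S] {A : Fin 3 → ℕ → Submodule ℂ S}
    (hA : ∀ j, Monotone (A j)) {b : Fin 3 → Matrix (Fin m) (Fin m) ℂ}
    (hb : ∀ j q p, p < q → b j q p = 0) :
    ∃ T : (∀ p : Fin 3 × Fin m, A p.1 p.2) →ₗ[ℂ] (∀ p : Fin 3 × Fin m, A p.1 p.2),
      (∀ u : Fin 3 → Matrix (Fin m) (Fin m) ℂ, relMap A (b * u) = relMap A u ∘ₗ T) ∧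
      LinearMap.trace ℂ _ T = ∑ p : Fin 3 × Fin m, b p.1 p.2 p.2 * finrank ℂ (A p.1 p.2) := by
  have hmem : ∀ (t : ∀ p : Fin 3 × Fin m, A p.1 p.2) (p : Fin 3 × Fin m),
      ∑ q, b p.1 q p.2 • (t (p.1, q) : S) ∈ A p.1 p.2 := by
    intro t p
    refine Submodule.sum_mem _ fun q _ => ?_
    by_cases hq : q ≤ p.2
    · exact Submodule.smul_mem _ _ (hA p.1 hq (t (p.1, q)).2)
    · rw [hb _ _ _ (not_le.1 hq), zero_smul]; exact Submodule.zero_mem _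
  let T : (∀ p : Fin 3 × Fin m, A p.1 p.2) →ₗ[ℂ] (∀ p : Fin 3 × Fin m, A p.1 p.2) :=
    { toFun := fun t p => ⟨∑ q, b p.1 q p.2 • (t (p.1, q) : S), hmem t p⟩
      map_add' := by
        intro t u; funext p; apply Subtype.ext; simp [Finset.sum_add_distrib]
      map_smul' := by
        intro c t; funext p; apply Subtype.ext; simp [Finset.smul_sum, smul_comm c] }
  have hT : ∀ t p, (T t p : S) = ∑ q, b p.1 q p.2 • (t (p.1, q) : S) := fun t p => rfl
  refine ⟨T, fun u => ?_, ?_⟩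
  · refine LinearMap.ext fun t => funext fun q' => ?_
    rw [LinearMap.comp_apply, relMap_apply, relMap_apply]
    simp only [hT, Fintype.sum_prod_type, Pi.mul_apply, Matrix.mul_apply, Finset.smul_sum,
      Finset.sum_smul, smul_smul]
    refine Finset.sum_congr rfl fun j _ => ?_
    rw [Finset.sum_comm]
    simp only [mul_comm]
  · rw [trace_eq_sum_trace_proj_comp_single]
    refine Finset.sum_congr rfl fun p _ => ?_
    have : LinearMap.proj p ∘ₗ T ∘ₗ LinearMap.single ℂ (fun p : Fin 3 × Fin m => A p.1 p.2) p =
        b p.1 p.2 p.2 • LinearMap.id := by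
      refine LinearMap.ext fun a => Subtype.ext ?_
      simp only [LinearMap.comp_apply, LinearMap.proj_apply, hT, LinearMap.single_apply]
      rw [Finset.sum_eq_single p.2]
      · simp
      · intro q _ hq
        have : (p.1, q) ≠ p := fun h => hq (by rw [← h])
        rw [Pi.single_eq_of_ne this]; simp
      · simp
    rw [this, map_smul, LinearMap.trace_id, smul_eq_mul]

theorem exists_comp_eq_relMap_mul_const [FiniteDimensional ℂ S]
    (A : Fin 3 → ℕ → Submodule ℂ S) (c : Matrix (Fin m) (Fin m) ℂ) :
    ∃ C : (Fin m → S) →ₗ[ℂ] (Fin m → S),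
      (∀ u : Fin 3 → Matrix (Fin m) (Fin m) ℂ,
        relMap A (fun j => u j * c) = C ∘ₗ relMap A u) ∧
      LinearMap.trace ℂ _ C = finrank ℂ S * c.trace := by
  let C : (Fin m → S) →ₗ[ℂ] (Fin m → S) :=
    { toFun := fun w q' => ∑ k, c k q' • w k
      map_add' := by intro t u; funext p; simp [Finset.sum_add_distrib]
      map_smul' := by intro a t; funext p; simp [Finset.smul_sum, smul_comm a] }
  have hC : ∀ w q', C w q' = ∑ k, c k q' • w k := fun _ _ => rfl
  refine ⟨C, fun u => ?_, ?_⟩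
  · refine LinearMap.ext fun t => funext fun q' => ?_
    rw [LinearMap.comp_apply, relMap_apply, hC]
    simp only [relMap_apply, Matrix.mul_apply, Finset.smul_sum, Finset.sum_smul, smul_smul]
    rw [Finset.sum_comm]
    simp only [mul_comm]
  · rw [trace_eq_sum_trace_proj_comp_single, Matrix.trace, Finset.mul_sum]
    refine Finset.sum_congr rfl fun q _ => ?_
    have : LinearMap.proj q ∘ₗ C ∘ₗ LinearMap.single ℂ (fun _ : Fin m => S) q =
        c q q • LinearMap.id := by
      refine LinearMap.ext fun a => ?_
      simp only [LinearMap.comp_apply, LinearMap.proj_apply, hC, LinearMap.single_apply]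
      rw [Finset.sum_eq_single q]
      · simp
      · intro k _ hk
        rw [Pi.single_eq_of_ne hk]; simp
      · simp
    rw [this, map_smul, LinearMap.trace_id, smul_eq_mul, mul_comm]; rfl

theorem relMap_injective_of_mul [FiniteDimensional ℂ S] {A : Fin 3 → ℕ → Submodule ℂ S}
    (hA : ∀ j, Monotone (A j)) (hdim : ∑ p : Fin 3 × Fin m, finrank ℂ (A p.1 p.2) =
      m * finrank ℂ S) {b u : Fin 3 → Matrix (Fin m) (Fin m) ℂ}
    (hb : ∀ j q p, p < q → b j q p = 0) (h : Function.Injective (relMap A (b * u))) :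
    Function.Injective (relMap A u) := by
  obtain ⟨T, hT, -⟩ := exists_comp_eq_relMap_mul hA hb
  have hd : finrank ℂ (∀ p : Fin 3 × Fin m, A p.1 p.2) = finrank ℂ (Fin m → S) := by
    rw [Module.finrank_pi_fintype, Module.finrank_pi_fintype, hdim]; simp
  rw [LinearMap.injective_iff_surjective_of_finrank_eq_finrank hd] at h ⊢
  rw [hT] at h
  exact Function.Surjective.of_comp h

theorem exists_upperTriangular_mul_unitary (x : Matrix (Fin m) (Fin m) ℂ) :
    ∃ b : Matrix (Fin m) (Fin m) ℂ, ∃ u ∈ Matrix.unitaryGroup (Fin m) ℂ,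
      (∀ q p, p < q → b q p = 0) ∧ x = b * u := by
  let f : Fin m → EuclideanSpace ℂ (Fin m) := fun q => WithLp.toLp 2 (x q.rev)
  let e := InnerProductSpace.gramSchmidtOrthonormalBasis (𝕜 := ℂ) (ι := Fin m)
    (E := EuclideanSpace ℂ (Fin m)) (by simp) f
  refine ⟨Matrix.of fun q p => inner ℂ (e p.rev) (f q.rev), Matrix.of fun p i => e p.rev i,
    ?_, ?_, ?_⟩
  · rw [Matrix.mem_unitaryGroup_iff]
    ext p q
    have h1 := orthonormal_iff_ite.1 e.orthonormal q.rev p.rev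
    rw [PiLp.inner_apply] at h1
    simp only [RCLike.inner_apply] at h1
    rw [Matrix.mul_apply, Matrix.one_apply]
    simp only [Matrix.star_apply]
    rw [show (if p = q then (1 : ℂ) else 0) = if q.rev = p.rev then 1 else 0 by
      simp [eq_comm], ← h1]
    rfl
  · intro q p hpq
    exact InnerProductSpace.gramSchmidtOrthonormalBasis_inv_triangular _ f (Fin.rev_lt_rev.2 hpq)
  · ext q i
    have h1 := e.sum_repr' (f q.rev)
    have h2 := congrArg (fun v : EuclideanSpace ℂ (Fin m) => v i) h1
    simp only [f, Fin.rev_rev] at h2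
    rw [Matrix.mul_apply, ← Equiv.sum_comp Fin.revPerm]
    simp only [Fin.revPerm_apply, Matrix.of_apply, Fin.rev_rev]
    rw [← h2]
    simp [f]

theorem hasDerivAt_det_of_eq_one {n : Type*} [Fintype n] [DecidableEq n]
    {c : ℝ → Matrix n n ℂ} {L : Matrix n n ℂ} {t₀ : ℝ} (hc : c t₀ = 1)
    (hL : ∀ i j, HasDerivAt (fun t => c t i j) (L i j) t₀) :
    HasDerivAt (fun t => (c t).det) L.trace t₀ := by
  simp only [Matrix.det_apply]
  have h1 : HasDerivAt (fun t => ∑ σ : Equiv.Perm n, Equiv.Perm.sign σ • ∏ i, c t (σ i) i)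
      (∑ σ : Equiv.Perm n, Equiv.Perm.sign σ • ∑ i,
        (∏ j ∈ Finset.univ.erase i, c t₀ (σ j) j) • L (σ i) i) t₀ :=
    HasDerivAt.fun_sum fun σ _ => (HasDerivAt.fun_finsetProd fun i _ => hL (σ i) i).const_smul _
  convert h1 using 1
  rw [Finset.sum_eq_single 1]
  · simp only [hc, Equiv.Perm.sign_one, one_smul, Equiv.Perm.one_apply, Matrix.one_apply_eq,
      Finset.prod_const_one]
    rfl
  · intro σ _ hσ
    rw [Finset.sum_eq_zero, smul_zero]
    intro i _
    obtain ⟨j, hji, hj⟩ : ∃ j, j ≠ i ∧ σ j ≠ j := by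
      by_contra! hall
      refine hσ (Equiv.ext fun k => ?_)
      by_cases hk : k = i
      · subst hk
        by_contra hne
        have := hall (σ k) hne
        exact hne (σ.injective this)
      · exact hall k hk
    rw [Finset.prod_eq_zero (Finset.mem_erase.2 ⟨hji, Finset.mem_univ j⟩), zero_smul]
    rw [hc, Matrix.one_apply_ne hj]
  · simp

open scoped Matrix.Norms.L2Operator in
theorem isCompact_unitary_tuples :
    IsCompact {u : Fin 3 → Matrix (Fin m) (Fin m) ℂ | ∀ j, u j ∈ Matrix.unitaryGroup (Fin m) ℂ} := by
  have h1 : IsCompact (Matrix.unitaryGroup (Fin m) ℂ : Set (Matrix (Fin m) (Fin m) ℂ)) := by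
    refine Metric.isCompact_of_isClosed_isBounded isClosed_unitary ?_
    refine (Metric.isBounded_closedBall (x := (0 : Matrix (Fin m) (Fin m) ℂ)) (r := ‖(1 : Matrix (Fin m) (Fin m) ℂ)‖)).subset ?_
    intro u hu
    rw [mem_closedBall_zero_iff]
    exact ((congrArg norm (one_mul u)).symm.trans (CStarRing.norm_mul_mem_unitary 1 hu)).le
  have h2 := isCompact_univ_pi (fun _ : Fin 3 => h1)
  convert h2 using 1
  ext u
  simp

open scoped Matrix.Norms.L2Operator in
theorem re_trace_eq_zero_of_det_max {V : Type*} [AddCommGroup V] [Module ℂ V]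
    [FiniteDimensional ℂ V] (P : (Fin 3 → Matrix (Fin m) (Fin m) ℂ) →ₗ[ℂ] (V →ₗ[ℂ] V))
    {u : Fin 3 → Matrix (Fin m) (Fin m) ℂ} (hu : ∀ j, u j ∈ Matrix.unitaryGroup (Fin m) ℂ)
    (hPu : P u = LinearMap.id)
    (hmax : ∀ w : Fin 3 → Matrix (Fin m) (Fin m) ℂ,
      (∀ j, w j ∈ Matrix.unitaryGroup (Fin m) ℂ) → ‖LinearMap.det (P w)‖ ≤ 1)
    {a : Fin 3 → Matrix (Fin m) (Fin m) ℂ} (ha : ∀ j, (a j)ᴴ = -a j) :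
    (LinearMap.trace ℂ V (P (a * u))).re = 0 := by
  let B := Module.finBasis ℂ V
  let γ : ℝ → Fin 3 → Matrix (Fin m) (Fin m) ℂ := fun t j => NormedSpace.exp (t • a j) * u j
  have hγ0 : γ 0 = u := by funext j; simp [γ]
  have hγ : HasDerivAt γ (a * u) 0 := by
    rw [hasDerivAt_pi]
    intro j
    have := (hasDerivAt_exp_smul_const (𝕂 := ℝ) (a j) 0).mul_const (u j)
    simpa using this
  have hγu : ∀ t j, γ t j ∈ Matrix.unitaryGroup (Fin m) ℂ := by
    intro t j
    let +nondep : NormedAlgebra ℚ (Matrix (Fin m) (Fin m) ℂ) := .restrictScalars ℚ ℂ _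
    refine Submonoid.mul_mem _ (NormedSpace.exp_mem_unitary_of_mem_skewAdjoint ?_) (hu j)
    rw [skewAdjoint.mem_iff, star_smul, Matrix.star_eq_conjTranspose, ha]
    simp
  let E : (Fin 3 → Matrix (Fin m) (Fin m) ℂ) →L[ℂ] Matrix (Fin (finrank ℂ V)) (Fin (finrank ℂ V)) ℂ :=
    LinearMap.toContinuousLinearMap ((LinearMap.toMatrix B B).toLinearMap ∘ₗ P)
  have hE : ∀ x, E x = LinearMap.toMatrix B B (P x) := fun x => rfl
  have hentry : ∀ i k, HasDerivAt (fun t => E (γ t) i k) (E (a * u) i k) 0 := by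
    intro i k
    have h1 : HasDerivAt (fun t => E (γ t)) (E (a * u)) 0 :=
      (E.restrictScalars ℝ).hasFDerivAt.comp_hasDerivAt (0 : ℝ) hγ
    let ev : Matrix (Fin (finrank ℂ V)) (Fin (finrank ℂ V)) ℂ →L[ℝ] ℂ :=
      LinearMap.toContinuousLinearMap (Matrix.entryLinearMap ℝ ℂ i k)
    exact ev.hasFDerivAt.comp_hasDerivAt (0 : ℝ) h1
  have hdet := hasDerivAt_det_of_eq_one (c := fun t => E (γ t)) (t₀ := 0)
    (by simp only [hγ0, hE, hPu, LinearMap.toMatrix_id]) hentry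
  have hre : HasDerivAt (fun t => (E (γ t)).det.re) (E (a * u)).trace.re 0 :=
    Complex.reCLM.hasFDerivAt.comp_hasDerivAt (0 : ℝ) hdet
  have hmax' : IsLocalMax (fun t => (E (γ t)).det.re) 0 := by
    refine Filter.Eventually.of_forall fun t => ?_
    have h0 : (E (γ 0)).det.re = 1 := by
      rw [hγ0, hE, hPu, LinearMap.toMatrix_id]; simp
    simp only [h0]
    refine (Complex.re_le_norm _).trans ?_
    rw [hE, LinearMap.det_toMatrix]
    exact hmax _ (hγu t)
  have := hmax'.hasDerivAt_eq_zero hre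
  rwa [hE, ← LinearMap.trace_eq_matrix_trace] at this

open scoped Matrix.Norms.L2Operator in
theorem continuous_det_linear {V : Type*} [AddCommGroup V] [Module ℂ V]
    [FiniteDimensional ℂ V] (P : (Fin 3 → Matrix (Fin m) (Fin m) ℂ) →ₗ[ℂ] (V →ₗ[ℂ] V)) :
    Continuous fun u => LinearMap.det (P u) := by
  let B := Module.finBasis ℂ V
  let E : (Fin 3 → Matrix (Fin m) (Fin m) ℂ) →L[ℂ] Matrix (Fin (finrank ℂ V)) (Fin (finrank ℂ V)) ℂ :=
    LinearMap.toContinuousLinearMap ((LinearMap.toMatrix B B).toLinearMap ∘ₗ P)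
  have h1 : ∀ u, LinearMap.det (P u) = (E u).det := fun u => (LinearMap.det_toMatrix B (P u)).symm
  simp only [h1]
  exact E.continuous.matrix_det

/-- The dependence of `relMap A h` on `h`, as a linear map. -/
def relMapLinear (A : Fin 3 → ℕ → Submodule ℂ S) :
    (Fin 3 → Matrix (Fin m) (Fin m) ℂ) →ₗ[ℂ]
      ((∀ p : Fin 3 × Fin m, A p.1 p.2) →ₗ[ℂ] (Fin m → S)) where
  toFun h := relMap A h
  map_add' h h' := by
    ext t q'
    simp only [relMap_apply, Pi.add_apply, Matrix.add_apply, LinearMap.add_apply, add_smul,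
      Finset.sum_add_distrib, LinearMap.coe_comp, Function.comp_apply]
  map_smul' c h := by
    ext t q'
    simp only [relMap_apply, Pi.smul_apply, Matrix.smul_apply, LinearMap.smul_apply, smul_smul,
      Finset.smul_sum, LinearMap.coe_comp, Function.comp_apply, smul_eq_mul, RingHom.id_apply]

theorem exists_skew_add_upperTriangular {M : Matrix (Fin m) (Fin m) ℂ} (hM : M.IsHermitian) :
    ∃ a b : Matrix (Fin m) (Fin m) ℂ, aᴴ = -a ∧ (∀ q p, p < q → b q p = 0) ∧
      (∀ q, b q q = M q q) ∧ M = a + b := by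
  refine ⟨Matrix.of fun q p => if p < q then M q p else if q < p then -M q p else 0,
    Matrix.of fun q p => if p < q then 0 else if q < p then 2 * M q p else M q p, ?_, ?_, ?_, ?_⟩
  · ext q p
    have := hM.apply q p
    rcases lt_trichotomy p q with h | h | h
    · simp [h, h.not_gt, this]
    · simp [h]
    · simp [h, h.not_gt, this]
  · intro q p h
    simp [h]
  · intro q
    simp
  · ext q p
    rcases lt_trichotomy p q with h | h | h
    · simp [h]
    · simp [h]
    · simp [h, h.not_gt]; ring

open scoped ComplexOrder in
theorem exists_unitary_sum_conj_diagonal [FiniteDimensional ℂ S]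
    {A : Fin 3 → ℕ → Submodule ℂ S} (hA : ∀ j, Monotone (A j))
    (hdim : ∑ p : Fin 3 × Fin m, finrank ℂ (A p.1 p.2) = m * finrank ℂ S)
    {h : Fin 3 → Matrix (Fin m) (Fin m) ℂ} (hinj : Function.Injective (relMap A h)) :
    ∃ u : Fin 3 → Matrix (Fin m) (Fin m) ℂ, (∀ j, u j ∈ Matrix.unitaryGroup (Fin m) ℂ) ∧
      ∑ j, (u j)ᴴ * Matrix.diagonal (fun q : Fin m => (finrank ℂ (A j q) : ℂ)) * u j =
        (finrank ℂ S : ℂ) • 1 := by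
  choose b u' hu' hb hbu using fun j => exists_upperTriangular_mul_unitary (h j)
  have hinj' : Function.Injective (relMap A u') := by
    refine relMap_injective_of_mul hA hdim hb ?_
    rwa [show b * u' = h from funext fun j => (hbu j).symm]
  have hd : finrank ℂ (∀ p : Fin 3 × Fin m, A p.1 p.2) = finrank ℂ (Fin m → S) := by
    rw [Module.finrank_pi_fintype, Module.finrank_pi_fintype, hdim]; simp
  have hbij : ∀ u, Function.Injective (relMap A u) → Function.Bijective (relMap A u) :=
    fun u hu => ⟨hu, (LinearMap.injective_iff_surjective_of_finrank_eq_finrank hd).1 hu⟩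
  let e := LinearEquiv.ofFinrankEq _ _ hd
  let Q : (Fin 3 → Matrix (Fin m) (Fin m) ℂ) →ₗ[ℂ]
      ((∀ p : Fin 3 × Fin m, A p.1 p.2) →ₗ[ℂ] (∀ p : Fin 3 × Fin m, A p.1 p.2)) :=
    (LinearMap.compRight ℂ e.symm.toLinearMap) ∘ₗ relMapLinear A
  have hQ : ∀ u, Q u = e.symm.toLinearMap ∘ₗ relMap A u := fun u => rfl
  obtain ⟨u, hu, hmax⟩ := isCompact_unitary_tuples.exists_isMaxOn ⟨u', hu'⟩
    (f := fun u => ‖LinearMap.det (Q u)‖) (continuous_det_linear Q).norm.continuousOn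
  have hdet' : LinearMap.det (Q u') ≠ 0 :=
    (LinearEquiv.isUnit_det' ((LinearEquiv.ofBijective _ (hbij u' hinj')).trans e.symm)).ne_zero
  have hdet : LinearMap.det (Q u) ≠ 0 := fun h0 => by
    have := hmax hu'
    simp only [Set.mem_ofPred_eq, h0, norm_zero] at this
    exact hdet' (norm_le_zero_iff.1 this)
  have hinju : Function.Injective (relMap A u) :=
    Function.Injective.of_comp (f := e.symm) (LinearMap.equivOfDetNeZero (Q u) hdet).injective
  let Rm := LinearEquiv.ofBijective _ (hbij u hinju)
  have hRm : (Rm : _ →ₗ[ℂ] (Fin m → S)) = relMap A u := rfl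
  let P : (Fin 3 → Matrix (Fin m) (Fin m) ℂ) →ₗ[ℂ]
      ((∀ p : Fin 3 × Fin m, A p.1 p.2) →ₗ[ℂ] (∀ p : Fin 3 × Fin m, A p.1 p.2)) :=
    (LinearMap.compRight ℂ Rm.symm.toLinearMap) ∘ₗ relMapLinear A
  have hP : ∀ w, P w = Rm.symm.toLinearMap ∘ₗ relMap A w := fun w => rfl
  have hPu : P u = LinearMap.id := by
    rw [hP, ← hRm]; exact LinearEquiv.symm_comp Rm
  have hPQ : ∀ w, LinearMap.det (P w) =
      LinearMap.det (Rm.symm.toLinearMap ∘ₗ e.toLinearMap) * LinearMap.det (Q w) := fun w => by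
    rw [← LinearMap.det_comp, hP, hQ]
    congr 1
    refine LinearMap.ext fun t => ?_
    simp
  have hPmax : ∀ w : Fin 3 → Matrix (Fin m) (Fin m) ℂ,
      (∀ j, w j ∈ Matrix.unitaryGroup (Fin m) ℂ) → ‖LinearMap.det (P w)‖ ≤ 1 := fun w hw => by
    have h1 := hPQ u
    rw [hPu, LinearMap.det_id] at h1
    have h2 : ‖LinearMap.det (Q w)‖ ≤ ‖LinearMap.det (Q u)‖ := hmax hw
    rw [hPQ, norm_mul]
    calc _ ≤ ‖LinearMap.det (Rm.symm.toLinearMap ∘ₗ e.toLinearMap)‖ * ‖LinearMap.det (Q u)‖ := by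
          gcongr
      _ = 1 := by rw [← norm_mul, ← h1, norm_one]
  refine ⟨u, hu, ?_⟩
  set D : Fin 3 → Matrix (Fin m) (Fin m) ℂ := fun j =>
    Matrix.diagonal (fun q : Fin m => (finrank ℂ (A j q) : ℂ)) with hD
  set Y : Matrix (Fin m) (Fin m) ℂ :=
    ∑ j, (u j)ᴴ * D j * u j - (finrank ℂ S : ℂ) • 1 with hY
  have hYh : Y.IsHermitian := by
    rw [Matrix.IsHermitian, hY, Matrix.conjTranspose_sub, Matrix.conjTranspose_sum]
    simp [hD, Matrix.mul_assoc, Matrix.diagonal_conjTranspose, Pi.star_def]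
  have hkey : ∀ H : Matrix (Fin m) (Fin m) ℂ, H.IsHermitian → (H * Y).trace.re = 0 := by
    intro H hH
    have hM : ∀ j, (u j * H * (u j)ᴴ).IsHermitian := fun j =>
      Matrix.isHermitian_mul_mul_conjTranspose (u j) hH
    choose a c ha hc hcd hac using fun j => exists_skew_add_upperTriangular (hM j)
    obtain ⟨T, hT, hTtr⟩ := exists_comp_eq_relMap_mul hA hc
    obtain ⟨C, hC, hCtr⟩ := exists_comp_eq_relMap_mul_const A H
    have huu : ∀ j, (u j)ᴴ * u j = 1 := fun j => Matrix.mem_unitaryGroup_iff'.1 (hu j)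
    have e1 : a * u + c * u = fun j => u j * H := by
      funext j
      rw [← add_mul, Pi.mul_apply, Pi.add_apply, ← hac, Matrix.mul_assoc, huu, Matrix.mul_one]
    have e2 : LinearMap.trace ℂ _ (P (c * u)) =
        ∑ p : Fin 3 × Fin m, c p.1 p.2 p.2 * finrank ℂ (A p.1 p.2) := by
      rw [← hTtr, hP, hT, ← LinearMap.comp_assoc, ← hP, hPu, LinearMap.id_comp]
    have e3 : LinearMap.trace ℂ _ (P fun j => u j * H) = finrank ℂ S * H.trace := by
      rw [← hCtr, hP, hC, ← LinearMap.comp_assoc, LinearMap.trace_comp_comm', ← LinearMap.comp_assoc,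
        ← hRm, LinearEquiv.comp_symm, LinearMap.id_comp]
    have e4 := re_trace_eq_zero_of_det_max P hu hPu hPmax ha
    have e5 : (H * ∑ j, (u j)ᴴ * D j * u j).trace =
        ∑ p : Fin 3 × Fin m, c p.1 p.2 p.2 * finrank ℂ (A p.1 p.2) := by
      rw [Finset.mul_sum, Matrix.trace_sum, Fintype.sum_prod_type]
      refine Finset.sum_congr rfl fun j _ => ?_
      rw [← Matrix.mul_assoc, Matrix.trace_mul_comm, ← Matrix.mul_assoc, ← Matrix.mul_assoc,
        Matrix.trace]
      refine Finset.sum_congr rfl fun q _ => ?_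
      simp only [hD, Matrix.diag_apply, Matrix.mul_diagonal, hcd]
    rw [hY, Matrix.mul_sub, Matrix.trace_sub, e5, ← e2, Matrix.mul_smul, Matrix.mul_one,
      Matrix.trace_smul, smul_eq_mul, ← e3, ← e1, map_add, map_add, Complex.sub_re, Complex.add_re,
      e4]
    ring
  have h1 := hkey Y hYh
  have h2 : 0 ≤ (Yᴴ * Y).trace := (Matrix.posSemidef_conjTranspose_mul_self Y).trace_nonneg
  have h3 : (Yᴴ * Y).trace = 0 := by
    rw [hYh.eq] at h2 ⊢
    exact Complex.ext h1 (Complex.nonneg_iff.1 h2).2.symm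
  have h4 := Matrix.trace_conjTranspose_mul_self_eq_zero_iff.1 h3
  exact sub_eq_zero.1 h4

end Filtered

theorem sum_card_filter_le_add {ι : Type*} [Fintype ι] {m : ℕ} {x : ι → ℕ} (hx : ∀ i, x i ≤ m) :
    ∑ q : Fin m, (Finset.univ.filter fun i => m ≤ (q : ℕ) + x i).card = ∑ i, x i := by
  simp only [Finset.card_filter]
  rw [Finset.sum_comm]
  refine Finset.sum_congr rfl fun i _ => ?_
  rw [Fin.sum_univ_eq_sum_range (fun q => if m ≤ q + x i then 1 else 0), ← Finset.card_filter,
    show (Finset.range m).filter (fun q => m ≤ q + x i) = Finset.Ico (m - x i) m by grind,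
    Nat.card_Ico]
  have := hx i
  omega

theorem finrank_span_image_filter {S : Type*} [NormedAddCommGroup S] [InnerProductSpace ℂ S]
    {ι : Type*} [Fintype ι] (e : OrthonormalBasis ι ℂ S) (s : Finset ι) :
    finrank ℂ (Submodule.span ℂ (e '' (s : Set ι))) = s.card := by
  classical
  rw [← Finset.coe_image, finrank_span_finset_eq_card, Finset.card_image_of_injective]
  · exact e.toBasis.injective
  · rw [Finset.coe_image]
    exact (e.orthonormal.linearIndependent.linearIndepOn_id).mono (Set.image_subset_range _ _)

theorem exists_unitary_of_sum_mul_norm_inner_sq {S : Type u} [NormedAddCommGroup S]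
    [InnerProductSpace ℂ S] {ι : Type*} [Fintype ι] [DecidableEq ι] (m : ℕ)
    (e : Fin 3 → OrthonormalBasis ι ℂ S) (x : Fin 3 → ι → ℕ) (hx : ∀ j i, x j i ≤ m)
    (hsum : ∀ w, ∑ j, ∑ i, (x j i : ℝ) * ‖inner ℂ (e j i) w‖ ^ 2 = m * ‖w‖ ^ 2) :
    ∃ u : Fin 3 → Matrix (Fin m) (Fin m) ℂ, (∀ j, u j ∈ Matrix.unitaryGroup (Fin m) ℂ) ∧
      ∑ j, (u j)ᴴ * Matrix.diagonal (fun q : Fin m =>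
        ((Finset.univ.filter fun i => m ≤ (q : ℕ) + x j i).card : ℂ)) * u j =
        (Fintype.card ι : ℂ) • 1 := by
  have : FiniteDimensional ℂ S := (e 0).toBasis.finiteDimensional_of_finite
  have : CompleteSpace S := FiniteDimensional.complete ℂ S
  have hS : finrank ℂ S = Fintype.card ι := Module.finrank_eq_card_basis (e 0).toBasis
  set A : Fin 3 → ℕ → Submodule ℂ S := fun j q => Submodule.span ℂ
    (e j '' ((Finset.univ.filter fun i => m ≤ q + x j i : Finset ι) : Set ι)) with hAdef
  have hA : ∀ j, Monotone (A j) := fun j q q' hq => by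
    refine Submodule.span_mono (Set.image_mono ?_)
    intro i hi
    simp only [Finset.coe_filter, Finset.mem_univ, true_and, Set.mem_ofPred_eq] at hi ⊢
    omega
  have htop : ∀ j, A j m = ⊤ := fun j => by
    simp only [hAdef, Nat.le_add_right, Finset.filter_true, Finset.coe_univ, Set.image_univ]
    simpa using (e j).toBasis.span_eq
  have hfin : ∀ j q, finrank ℂ (A j q) = (Finset.univ.filter fun i => m ≤ q + x j i).card :=
    fun j q => finrank_span_image_filter (e j) _
  have hss := eventually_sum_finrank_inf_le m e x hx hsum
  have hfreq : ∃ᶠ y in 𝓝 ((1 : Fin 3 → (S →L[ℂ] S)), (0 : Fin 3 → Matrix (Fin m) (Fin m) ℂ)),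
      Function.Injective (relMap (moveFilt A y.1) y.2) := by
    intro hnot
    obtain ⟨g, ⟨U, hU⟩, hg⟩ := ((frequently_exists_destabilizing _ S rfl A hA htop 0
      hnot).and_eventually hss).exists
    exact (hg U).not_gt hU
  have hunit : ∀ᶠ y in 𝓝 ((1 : Fin 3 → (S →L[ℂ] S)), (0 : Fin 3 → Matrix (Fin m) (Fin m) ℂ)),
      ∀ j, IsUnit (y.1 j) := by
    rw [eventually_all]
    intro j
    have hc : Tendsto (fun y : (Fin 3 → (S →L[ℂ] S)) × (Fin 3 → Matrix (Fin m) (Fin m) ℂ) => y.1 j)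
        (𝓝 (1, 0)) (𝓝 1) :=
      ((continuous_apply j).comp continuous_fst).tendsto' _ _ rfl
    exact hc.eventually (Units.isOpen.mem_nhds isUnit_one)
  obtain ⟨⟨g, h⟩, hinj, hg⟩ := (hfreq.and_eventually hunit).exists
  have hgi : ∀ j, Function.Injective (g j : S →ₗ[ℂ] S) := fun j => by
    obtain ⟨v, hv⟩ := hg j
    have : Function.LeftInverse (↑v⁻¹ : S →L[ℂ] S) (g j) := fun t => by
      have h1 := congrArg (fun f : S →L[ℂ] S => f t) v.inv_mul
      rw [hv] at h1
      exact h1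
    exact this.injective
  have hfin' : ∀ j q, finrank ℂ (moveFilt A g j q) =
      (Finset.univ.filter fun i => m ≤ q + x j i).card := fun j q => by
    rw [← hfin]
    exact finrank_map_of_injective (hgi j) _
  have hA' : ∀ j, Monotone (moveFilt A g j) := fun j q q' hq => Submodule.map_mono (hA j hq)
  have htotal : ∑ j, ∑ i, x j i = m * Fintype.card ι := by
    have h1 : ∀ j i, ∑ k, (x j i : ℝ) * ‖inner ℂ (e j i) (e 0 k)‖ ^ 2 = x j i := fun j i => by
      rw [← Finset.mul_sum, (e 0).sum_sq_norm_inner_left]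
      simp
    have h3 : (∑ j, ∑ i, (x j i : ℝ)) = m * Fintype.card ι := by
      calc (∑ j, ∑ i, (x j i : ℝ)) =
            ∑ j, ∑ i, ∑ k, (x j i : ℝ) * ‖inner ℂ (e j i) (e 0 k)‖ ^ 2 :=
          Finset.sum_congr rfl fun j _ => Finset.sum_congr rfl fun i _ => (h1 j i).symm
        _ = ∑ j, ∑ k, ∑ i, (x j i : ℝ) * ‖inner ℂ (e j i) (e 0 k)‖ ^ 2 :=
          Finset.sum_congr rfl fun j _ => Finset.sum_comm
        _ = ∑ k : ι, (m : ℝ) * ‖e 0 k‖ ^ 2 := by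
          rw [Finset.sum_comm]
          exact Finset.sum_congr rfl fun k _ => hsum (e 0 k)
        _ = m * Fintype.card ι := by simp [mul_comm]
    exact_mod_cast h3
  have hdim : ∑ p : Fin 3 × Fin m, finrank ℂ (moveFilt A g p.1 p.2) = m * finrank ℂ S := by
    rw [Finset.sum_congr rfl fun p _ => hfin' p.1 p.2, Fintype.sum_prod_type, hS, ← htotal]
    exact Finset.sum_congr rfl fun j _ => sum_card_filter_le_add (hx j)
  obtain ⟨u, hu, hsum'⟩ := exists_unitary_sum_conj_diagonal hA' hdim hinj
  refine ⟨u, hu, ?_⟩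
  rw [← hS, ← hsum']
  refine Finset.sum_congr rfl fun j _ => ?_
  rw [show (fun q : Fin m => ((Finset.univ.filter fun i => m ≤ (q : ℕ) + x j i).card : ℂ)) =
    fun q : Fin m => (finrank ℂ (moveFilt A g j q) : ℂ) from funext fun q => by rw [hfin']]

theorem Multiset.map_comp_equiv_univ_val {α β : Type*} [Fintype α] (f : α → β)
    (σ : Equiv.Perm α) :
    Multiset.map (f ∘ σ) Finset.univ.val = Multiset.map f Finset.univ.val := by
  rw [← Multiset.map_map, Multiset.map_univ_val_equiv]

theorem Antitone.eq_of_map_univ_val_eq {k : ℕ} {f g : Fin k → ℝ} (hf : Antitone f)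
    (hg : Antitone g)
    (h : Multiset.map f Finset.univ.val = Multiset.map g Finset.univ.val) : f = g := by
  rw [Fin.univ_val_map, Fin.univ_val_map, Multiset.coe_eq_coe] at h
  refine List.ofFn_injective (h.eq_of_pairwise' (r := (· ≥ ·)) ?_ ?_)
  · exact List.sortedGE_iff_pairwise.1 hf.sortedGE_ofFn
  · exact List.sortedGE_iff_pairwise.1 hg.sortedGE_ofFn

theorem antitone_eigVec {k : ℕ} (X : Matrix (Fin k) (Fin k) ℂ) (hX : X.IsHermitian) :
    Antitone (eigVec X hX) := fun _ _ hij =>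
  Tuple.monotone_sort hX.eigenvalues (Fin.rev_le_rev.2 hij)

theorem eigVec_eq_comp_perm {k : ℕ} (X : Matrix (Fin k) (Fin k) ℂ) (hX : X.IsHermitian) :
    eigVec X hX = hX.eigenvalues ∘ (Fin.revPerm.trans (Tuple.sort hX.eigenvalues)) := rfl

theorem eigVec_eq_of_conj_diagonal {k : ℕ} {X : Matrix (Fin k) (Fin k) ℂ} (hX : X.IsHermitian)
    {u : Matrix (Fin k) (Fin k) ℂ} (hu : u ∈ Matrix.unitaryGroup (Fin k) ℂ) {v : Fin k → ℝ}
    (hv : Antitone v) (σ : Equiv.Perm (Fin k))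
    (h : X = uᴴ * Matrix.diagonal (fun i => (v (σ i) : ℂ)) * u) : eigVec X hX = v := by
  have hchar : X.charpoly = (Matrix.diagonal (fun i => (v (σ i) : ℂ))).charpoly := by
    rw [h, Matrix.charpoly_mul_comm, ← Matrix.mul_assoc,
      ← Matrix.star_eq_conjTranspose, Matrix.mem_unitaryGroup_iff.1 hu, Matrix.one_mul]
  have h1 := hX.roots_charpoly_eq_eigenvalues
  rw [hchar, Matrix.charpoly_diagonal, Polynomial.roots_prod _ _
    (Finset.prod_ne_zero_iff.2 fun i _ => Polynomial.X_sub_C_ne_zero _)] at h1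
  have h2 := congrArg (Multiset.map Complex.re) h1
  simp only [Polynomial.roots_X_sub_C, Multiset.bind_singleton, Multiset.map_map,
    Function.comp_def, Complex.ofReal_re] at h2
  refine (antitone_eigVec X hX).eq_of_map_univ_val_eq hv ?_
  rw [eigVec_eq_comp_perm, Multiset.map_comp_equiv_univ_val, ← Multiset.map_comp_equiv_univ_val v σ]
  exact h2.symm

theorem exists_orthonormalBasis_eigVec {k : ℕ} (X : Matrix (Fin k) (Fin k) ℂ)
    (hX : X.IsHermitian) : ∃ e : OrthonormalBasis (Fin k) ℂ (EuclideanSpace ℂ (Fin k)),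
      ∀ i, Matrix.toEuclideanLin X (e i) = (eigVec X hX i : ℂ) • e i := by
  refine ⟨hX.eigenvectorBasis.reindex (Fin.revPerm.trans (Tuple.sort hX.eigenvalues)).symm,
    fun i => ?_⟩
  rw [OrthonormalBasis.reindex_apply, Equiv.symm_symm, eigVec_eq_comp_perm]
  have := hX.mulVec_eigenvectorBasis ((Fin.revPerm.trans (Tuple.sort hX.eigenvalues)) i)
  ext q
  have hq := congrFun this q
  simpa [Matrix.toLpLin_apply] using hq

theorem inner_toEuclideanLin_eq_sum {k : ℕ} {X : Matrix (Fin k) (Fin k) ℂ}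
    {e : OrthonormalBasis (Fin k) ℂ (EuclideanSpace ℂ (Fin k))} {v : Fin k → ℝ}
    (he : ∀ i, Matrix.toEuclideanLin X (e i) = (v i : ℂ) • e i) (w : EuclideanSpace ℂ (Fin k)) :
    (inner ℂ w (Matrix.toEuclideanLin X w)).re = ∑ i, v i * ‖inner ℂ (e i) w‖ ^ 2 := by
  have h1 : Matrix.toEuclideanLin X w = ∑ i, (inner ℂ (e i) w * v i) • e i := by
    conv_lhs => rw [← e.sum_repr' w]
    simp only [map_sum, map_smul, he, smul_smul]
  rw [h1, inner_sum, Complex.re_sum]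
  refine Finset.sum_congr rfl fun i _ => ?_
  rw [inner_smul_right, ← inner_conj_symm w (e i), mul_right_comm, Complex.mul_conj,
    ← Complex.ofReal_mul, Complex.ofReal_re, Complex.normSq_eq_norm_sq, mul_comm]

theorem lt_card_filter_lt_iff {n r : ℕ} {A : Finset (Fin n)} (h : A.card = r) (t : Fin r)
    (y : Fin n) : (t : ℕ) < (A.filter (· < y)).card ↔ A.orderEmbOfFin h t < y := by
  constructor
  · contrapose!
    intro hy
    have hsub : A.filter (· < y) ⊆ (Finset.Iio t).map (A.orderEmbOfFin h).toEmbedding := by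
      intro a ha
      rw [Finset.mem_filter] at ha
      obtain ⟨s, rfl⟩ : a ∈ Set.range (A.orderEmbOfFin h) := by
        rw [Finset.range_orderEmbOfFin]; exact ha.1
      refine Finset.mem_map_of_mem _ (Finset.mem_Iio.2 ?_)
      exact (A.orderEmbOfFin h).lt_iff_lt.1 (ha.2.trans_le hy)
    simpa using Finset.card_le_card hsub
  · intro hy
    have hsub : (Finset.Iic t).map (A.orderEmbOfFin h).toEmbedding ⊆ A.filter (· < y) := by
      intro a ha
      obtain ⟨s, hs, rfl⟩ := Finset.mem_map.1 ha
      refine Finset.mem_filter.2 ⟨Finset.orderEmbOfFin_mem A h s, ?_⟩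
      exact ((A.orderEmbOfFin h).monotone (Finset.mem_Iic.1 hs)).trans_lt hy
    have := Finset.card_le_card hsub
    rw [Finset.card_map, Fin.card_Iic] at this
    omega

theorem card_filter_lt_orderEmbOfFin {n r : ℕ} {A : Finset (Fin n)} (h : A.card = r)
    (i : Fin r) : (A.filter (· < A.orderEmbOfFin h i)).card = i := by
  refine le_antisymm ?_ ?_
  · by_contra! hlt
    exact lt_irrefl _ ((lt_card_filter_lt_iff h i _).1 hlt)
  · by_contra! hlt
    have hi := (lt_card_filter_lt_iff h ⟨_, hlt.trans i.2⟩ (A.orderEmbOfFin h i)).2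
      ((A.orderEmbOfFin h).strictMono hlt)
    exact lt_irrefl _ hi

theorem muVec_eq_card {n r : ℕ} (A : Finset (Fin n)) (h : A.card = r) (k : Fin r) :
    muVec A h k = ((Aᶜ.filter (· < A.orderEmbOfFin h k.rev)).card : ℝ) := by
  have h1 : (A.filter (· < A.orderEmbOfFin h k.rev)).card +
      (Aᶜ.filter (· < A.orderEmbOfFin h k.rev)).card = (A.orderEmbOfFin h k.rev : Fin n) := by
    rw [← Finset.card_union_of_disjoint
      (Finset.disjoint_filter_filter disjoint_compl_right), ← Finset.filter_union,
      Finset.union_compl, Finset.filter_gt_eq_Iio, Fin.card_Iio]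
  rw [card_filter_lt_orderEmbOfFin] at h1
  have h2 : muVec A h k = ((A.orderEmbOfFin h k.rev : Fin n) : ℕ) - ((k.rev : ℕ) : ℝ) := rfl
  rw [h2, ← h1]
  push_cast
  ring

theorem orderEmbOfFin_compl_opp {n m : ℕ} {A : Finset (Fin n)} (h : Aᶜ.card = m)
    (h' : ((opp A)ᶜ).card = m) (k : Fin m) :
    ((opp A)ᶜ).orderEmbOfFin h' k.rev = (Aᶜ.orderEmbOfFin h k).rev := by
  have := Finset.orderEmbOfFin_unique h' (f := fun k => (Aᶜ.orderEmbOfFin h k.rev).rev) ?_ ?_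
  · rw [← this]
    simp
  · intro x
    have hx := Finset.orderEmbOfFin_mem Aᶜ h x.rev
    simp only [opp, Finset.mem_compl, Finset.mem_image, not_exists, not_and] at hx ⊢
    intro a ha hax
    rw [Fin.rev_inj] at hax
    exact hx (hax ▸ ha)
  · intro x y hxy
    exact Fin.rev_lt_rev.2 ((Aᶜ.orderEmbOfFin h).strictMono (Fin.rev_lt_rev.2 hxy))

theorem muVec_compl_opp {n m : ℕ} {A : Finset (Fin n)} (h : Aᶜ.card = m)
    (h' : ((opp A)ᶜ).card = m) (k : Fin m) :
    muVec ((opp A)ᶜ) h' k = ((A.filter (Aᶜ.orderEmbOfFin h k < ·)).card : ℝ) := by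
  rw [muVec_eq_card, orderEmbOfFin_compl_opp h h', compl_compl, opp, Finset.filter_image,
    Finset.card_image_of_injective _ Fin.rev_injective]
  simp only [Fin.rev_lt_rev]

/-- The number of parts of `muVec A` that exceed `k` is the `k`-th part of `muVec ((opp A)ᶜ)`. -/
theorem muVec_compl_opp_eq_card {n r m : ℕ} {A : Finset (Fin n)} (hA : A.card = r)
    (h : Aᶜ.card = m) (h' : ((opp A)ᶜ).card = m) (k : Fin m) :
    muVec ((opp A)ᶜ) h' k = ((Finset.univ.filter fun i : Fin r =>
      (k : ℕ) < (Aᶜ.filter (· < A.orderEmbOfFin hA i.rev)).card).card : ℝ) := by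
  rw [muVec_compl_opp h h']
  congr 1
  simp only [lt_card_filter_lt_iff h]
  symm
  refine Finset.card_bij (fun i _ => A.orderEmbOfFin hA i.rev) ?_ ?_ ?_
  · intro i hi
    exact Finset.mem_filter.2 ⟨Finset.orderEmbOfFin_mem A hA _, (Finset.mem_filter.1 hi).2⟩
  · intro i _ i' _ hii
    exact Fin.rev_injective ((A.orderEmbOfFin hA).injective hii)
  · intro a ha
    rw [Finset.mem_filter] at ha
    obtain ⟨s, rfl⟩ : a ∈ Set.range (A.orderEmbOfFin hA) := by
      rw [Finset.range_orderEmbOfFin]; exact ha.1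
    exact ⟨s.rev, by simpa using ha.2, by simp⟩

theorem opp_compl_opp_compl {n : ℕ} (A : Finset (Fin n)) : (opp ((opp A)ᶜ))ᶜ = A := by
  ext a
  simp only [opp, Finset.mem_compl, Finset.mem_image, not_exists, not_and]
  constructor
  · intro h
    by_contra ha
    refine h a.rev (fun b hb hba => ha ?_) (Fin.rev_rev a)
    rwa [← Fin.rev_injective hba]
  · rintro ha b hb rfl
    exact hb _ ha (Fin.rev_rev b)

/-- `conjVec m a` is the list of the first `m` parts of the partition conjugate to `a`. -/
def conjVec {r : ℕ} (m : ℕ) (a : Fin r → ℕ) : Fin m → ℝ :=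
  fun k => ((Finset.univ.filter fun i : Fin r => (k : ℕ) < a i).card : ℝ)

theorem antitone_conjVec {r : ℕ} (m : ℕ) (a : Fin r → ℕ) : Antitone (conjVec m a) := by
  intro k l hkl
  simp only [conjVec]
  refine Nat.cast_le.2 (Finset.card_le_card fun i hi => ?_)
  simp only [Finset.mem_filter, Finset.mem_univ, true_and] at hi ⊢
  exact lt_of_le_of_lt hkl hi

theorem conjVec_mem_horn {r m : ℕ} {a b c : Fin r → ℕ} (ha : ∀ i, a i ≤ m) (hb : ∀ i, b i ≤ m)
    (hc : ∀ i, c i ≤ m)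
    (h : ((fun i => (a i : ℝ)), (fun i => (b i : ℝ)), (fun i => (c i : ℝ))) ∈ Horn r) :
    (conjVec m a, conjVec m b, conjVec m c) ∈ Horn m := by
  obtain ⟨X, Y, hX, hY, h1, h2, h3⟩ := h
  dsimp only at h1 h2 h3
  obtain ⟨e₁, he₁⟩ := exists_orthonormalBasis_eigVec X hX
  obtain ⟨e₂, he₂⟩ := exists_orthonormalBasis_eigVec Y hY
  obtain ⟨e₃, he₃⟩ := exists_orthonormalBasis_eigVec (X + Y) (hX.add hY)
  rw [← h1] at he₁
  rw [← h2] at he₂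
  rw [← h3] at he₃
  obtain ⟨u, hu, hsum⟩ := exists_unitary_of_sum_mul_norm_inner_sq m ![e₁, e₂, e₃]
    ![a, b, fun i => m - c i] (by
      intro j i
      fin_cases j
      · exact ha i
      · exact hb i
      · exact Nat.sub_le _ _) (by
      intro w
      have q₁ := inner_toEuclideanLin_eq_sum he₁ w
      have q₂ := inner_toEuclideanLin_eq_sum he₂ w
      have q₃ := inner_toEuclideanLin_eq_sum he₃ w
      rw [map_add, LinearMap.add_apply, inner_add_right, Complex.add_re, q₁, q₂] at q₃
      have q₄ : ∑ i, ((m - c i : ℕ) : ℝ) * ‖inner ℂ (e₃ i) w‖ ^ 2 =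
          m * ‖w‖ ^ 2 - ∑ i, (c i : ℝ) * ‖inner ℂ (e₃ i) w‖ ^ 2 := by
        rw [← e₃.sum_sq_norm_inner_right w, Finset.mul_sum, ← Finset.sum_sub_distrib]
        refine Finset.sum_congr rfl fun i _ => ?_
        rw [Nat.cast_sub (hc i)]
        ring
      simp only [Fin.sum_univ_three, Matrix.cons_val]
      rw [q₄]
      linarith)
  have key : ∀ f : Fin r → ℕ, (∀ i, f i ≤ m) → ∀ q : Fin m,
      ((Finset.univ.filter fun i => m ≤ (q : ℕ) + f i).card : ℂ) =
        ((conjVec m f (Fin.revPerm q) : ℝ) : ℂ) := by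
    intro f hf q
    simp only [conjVec, Complex.ofReal_natCast]
    congr 2
    ext i
    simp only [Finset.mem_filter, Finset.mem_univ, true_and, Fin.revPerm_apply, Fin.val_rev]
    omega
  have key' : ∀ q : Fin m, ((Finset.univ.filter fun i => m ≤ (q : ℕ) + (m - c i)).card : ℂ) =
        r - ((conjVec m c (Equiv.refl _ q) : ℝ) : ℂ) := by
    intro q
    have h1 := Finset.card_filter_add_card_filter_not (s := (Finset.univ : Finset (Fin r)))
      (fun i => (q : ℕ) < c i)
    have h2 : (Finset.univ.filter fun i => m ≤ (q : ℕ) + (m - c i)) =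
        Finset.univ.filter fun i => ¬ (q : ℕ) < c i := by
      ext i
      have := hc i
      simp only [Finset.mem_filter, Finset.mem_univ, true_and]
      omega
    rw [h2, eq_sub_iff_add_eq, add_comm]
    simp only [conjVec, Complex.ofReal_natCast, Equiv.refl_apply]
    rw [Finset.card_univ, Fintype.card_fin] at h1
    exact_mod_cast h1
  rw [Fin.sum_univ_three, Fintype.card_fin] at hsum
  replace hsum : (u 0)ᴴ * Matrix.diagonal (fun q : Fin m =>
        ((Finset.univ.filter fun i => m ≤ (q : ℕ) + a i).card : ℂ)) * u 0 +
      (u 1)ᴴ * Matrix.diagonal (fun q : Fin m =>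
        ((Finset.univ.filter fun i => m ≤ (q : ℕ) + b i).card : ℂ)) * u 1 +
      (u 2)ᴴ * Matrix.diagonal (fun q : Fin m =>
        ((Finset.univ.filter fun i => m ≤ (q : ℕ) + (m - c i)).card : ℂ)) * u 2 =
      (r : ℂ) • 1 := hsum
  rw [funext (key a ha), funext (key b hb), funext key'] at hsum
  have hdiag : Matrix.diagonal (fun q : Fin m =>
      (r : ℂ) - ((conjVec m c (Equiv.refl _ q) : ℝ) : ℂ)) =
      (r : ℂ) • 1 - Matrix.diagonal (fun q => ((conjVec m c (Equiv.refl _ q) : ℝ) : ℂ)) := by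
    rw [← Matrix.diagonal_one, ← Matrix.diagonal_smul, Matrix.diagonal_sub]
    simp
  have huu : (u 2)ᴴ * u 2 = 1 := Matrix.mem_unitaryGroup_iff'.1 (hu 2)
  rw [hdiag, Matrix.mul_sub, Matrix.sub_mul, Matrix.mul_smul, Matrix.mul_one, Matrix.smul_mul, huu,
    add_sub_left_comm, add_eq_left, sub_eq_zero] at hsum
  have hherm : ∀ (v : Matrix (Fin m) (Fin m) ℂ) (d : Fin m → ℝ),
      (vᴴ * Matrix.diagonal (fun q => (d q : ℂ)) * v).IsHermitian := fun v d =>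
    Matrix.isHermitian_conjTranspose_mul_mul v
      (Matrix.isHermitian_diagonal_of_self_adjoint _ (by ext q; simp))
  refine ⟨_, _, hherm (u 0) fun q => conjVec m a (Fin.revPerm q),
    hherm (u 1) fun q => conjVec m b (Fin.revPerm q), ?_, ?_, ?_⟩
  · exact (eigVec_eq_of_conj_diagonal _ (hu 0) (antitone_conjVec m a) _ rfl).symm
  · exact (eigVec_eq_of_conj_diagonal _ (hu 1) (antitone_conjVec m b) _ rfl).symm
  · exact (eigVec_eq_of_conj_diagonal _ (hu 2) (antitone_conjVec m c) _ hsum).symm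

theorem muVec_compl_opp_mem_horn {n r m : ℕ} {I J K : Finset (Fin n)} (hI : I.card = r)
    (hJ : J.card = r) (hK : K.card = r) (hI' : ((opp I)ᶜ).card = m) (hJ' : ((opp J)ᶜ).card = m)
    (hK' : ((opp K)ᶜ).card = m) (h : (muVec I hI, muVec J hJ, muVec K hK) ∈ Horn r) :
    (muVec ((opp I)ᶜ) hI', muVec ((opp J)ᶜ) hJ', muVec ((opp K)ᶜ) hK') ∈ Horn m := by
  have hcard : ∀ {A : Finset (Fin n)}, ((opp A)ᶜ).card = m → Aᶜ.card = m := fun {A} hA => by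
    rw [← hA, Finset.card_compl, Finset.card_compl, opp,
      Finset.card_image_of_injective _ Fin.rev_injective]
  have hle : ∀ {A : Finset (Fin n)} (hA : Aᶜ.card = m) (y : Fin n),
      (Aᶜ.filter (· < y)).card ≤ m := fun hA y => hA ▸ Finset.card_filter_le _ _
  rw [funext (muVec_eq_card I hI), funext (muVec_eq_card J hJ), funext (muVec_eq_card K hK)] at h
  have := conjVec_mem_horn (fun i => hle (hcard hI') _) (fun i => hle (hcard hJ') _)
    (fun i => hle (hcard hK') _) h
  rwa [funext (muVec_compl_opp_eq_card hI (hcard hI') hI'),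
    funext (muVec_compl_opp_eq_card hJ (hcard hJ') hJ'),
    funext (muVec_compl_opp_eq_card hK (hcard hK') hK')]

theorem stmt_19 (n r : ℕ) (hr : 1 ≤ r) (hrn : r < n)
    (I J K : Finset (Fin n)) (hI : I.card = r) (hJ : J.card = r) (hK : K.card = r) :
    (muVec I hI, muVec J hJ, muVec K hK) ∈ Horn r ↔
      (muVec ((opp I)ᶜ)
          (by simp [opp, Finset.card_compl,
            Finset.card_image_of_injective _ Fin.rev_injective, hI]),
        muVec ((opp J)ᶜ)
          (by simp [opp, Finset.card_compl,
            Finset.card_image_of_injective _ Fin.rev_injective, hJ]),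
        muVec ((opp K)ᶜ)
          (by simp [opp, Finset.card_compl,
            Finset.card_image_of_injective _ Fin.rev_injective, hK])) ∈ Horn (n - r) := by
  refine ⟨muVec_compl_opp_mem_horn hI hJ hK _ _ _, fun h => ?_⟩
  have hcongr : ∀ {A B : Finset (Fin n)} (hA : A.card = r) (hB : B.card = r), A = B →
      muVec A hA = muVec B hB := by
    rintro A B hA hB rfl
    rfl
  have hback : ∀ {A : Finset (Fin n)}, A.card = r → ((opp ((opp A)ᶜ))ᶜ).card = r := fun hA => by
    rwa [opp_compl_opp_compl]
  have := muVec_compl_opp_mem_horn _ _ _ (hback hI) (hback hJ) (hback hK) h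
  rwa [hcongr (hback hI) hI (opp_compl_opp_compl I), hcongr (hback hJ) hJ (opp_compl_opp_compl J),
    hcongr (hback hK) hK (opp_compl_opp_compl K)] at this
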